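/- arXiv:1705.09707 — 3 statements merged into one kernel-verified Lean document; each statement's English description precedes it below -/
import Mathlib

section
/- Let G ↷ (X, μ) be a pmp action of a countable group, let F be a G-invariant sub-σ-algebra, and let (B_n)_{n∈ℕ} be an increasing sequence of G-invariant sub-σ-algebras with ⋁_{n∈ℕ} B_n = Borel(X) modulo μ-null sets. Then rh_G(X, μ | F) < ∞ if and only if both: inf_n sup_{m≥n} rh_{G,μ}(B_m | B_n ∨ F) = 0, and rh_{G,μ}(B_m | F) < ∞ for every m. Furthermore, when rh_G(X, μ | F) < ∞, one has rh_G(X, μ | F) = sup_m rh_{G,μ}(B_m | F). -/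
open MeasureTheory Set Function
open scoped ENNReal symmDiff

/-- A set in a measurable space is *analytic* if it is the image of a Borel subset of a
standard Borel space under a Borel (measurable) map. -/
def IsAnalyticS {W : Type*} [MeasurableSpace W] (A : Set W) : Prop :=
  ∃ (Z : Type) (mZ : MeasurableSpace Z), @StandardBorelSpace Z mZ ∧
    ∃ (B : Set Z) (f : Z → W), MeasurableSet[mZ] B ∧ @Measurable Z W mZ _ f ∧ f '' B = A

/-- The smallest `G`-invariant sub-σ-algebra containing the collection `ξ`. -/
def sigmaG (G : Type*) {X : Type*} [Group G] [MulAction G X] (ξ : Set (Set X)) :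
    MeasurableSpace X :=
  MeasurableSpace.generateFrom {B | ∃ (g : G), ∃ A ∈ ξ, B = (fun x => g • x) ⁻¹' A}

/-- The σ-algebra of `G`-invariant measurable sets. -/
def invSigma (G X : Type*) [Group G] [MulAction G X] [MeasurableSpace X] :
    MeasurableSpace X :=
  MeasurableSpace.generateFrom {A | MeasurableSet A ∧ ∀ g : G, (fun x => g • x) ⁻¹' A = A}

/-- Conditional Shannon entropy `H_μ(α | m)` of a countable partition `α` given a
sub-σ-algebra `m`, valued in `[0,∞]`. -/
noncomputable def condEnt {X : Type*} (m : MeasurableSpace X) [mX : MeasurableSpace X]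
    (μ : Measure X) {ι : Type*} (α : ι → Set X) : ℝ≥0∞ :=
  ∫⁻ x, ∑' i, ENNReal.ofReal
    (Real.negMulLog ((μ[(α i).indicator (fun _ => (1 : ℝ)) | m]) x)) ∂μ

/-- Shannon entropy `H_μ(α)` of a countable partition. -/
noncomputable def shEnt {X : Type*} [MeasurableSpace X] (μ : Measure X)
    {ι : Type*} (α : ι → Set X) : ℝ≥0∞ :=
  ∑' i, ENNReal.ofReal (Real.negMulLog (μ (α i)).toReal)

/-- `α` is a countable Borel partition of `X` (indexed by `ℕ`, cells may be empty). -/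
def IsPartition {X : Type*} [MeasurableSpace X] (α : ℕ → Set X) : Prop :=
  (∀ i, MeasurableSet (α i)) ∧ Pairwise (Function.onFun Disjoint α) ∧ (⋃ i, α i) = univ

/-- Every set of `ξ` agrees with an `m`-measurable set modulo `μ`-null sets. -/
def SubsetMod {X : Type*} (m : MeasurableSpace X) [mX : MeasurableSpace X] (μ : Measure X)
    (ξ : Set (Set X)) : Prop :=
  ∀ A ∈ ξ, ∃ B, MeasurableSet[m] B ∧ μ (A ∆ B) = 0

/-- Outer Rokhlin entropy `rh_{G,μ}(ξ | F)`. -/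
noncomputable def outerRokhlin (G : Type*) {X : Type*} (ξ : Set (Set X))
    (F : MeasurableSpace X) [Group G] [MulAction G X] [mX : MeasurableSpace X]
    (μ : Measure X) : ℝ≥0∞ :=
  sInf { h | ∃ α : ℕ → Set X, IsPartition α ∧
      SubsetMod (sigmaG G (Set.range α) ⊔ F ⊔ invSigma G X) μ ξ ∧
      h = condEnt (F ⊔ invSigma G X) μ α }

/-- Rokhlin entropy `rh_G(X, μ | F)`. -/
noncomputable def rokhlin (G : Type*) {X : Type*} (F : MeasurableSpace X) [Group G]
    [MulAction G X] [mX : MeasurableSpace X] (μ : Measure X) : ℝ≥0∞ :=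
  outerRokhlin G {A | MeasurableSet A} F μ

/-- Outer Rokhlin entropy `rh_{G,μ}(S | F)` of a sub-σ-algebra `S`. -/
noncomputable def outerRokhlinAlg (G : Type*) {X : Type*} (S F : MeasurableSpace X) [Group G]
    [MulAction G X] [mX : MeasurableSpace X] (μ : Measure X) : ℝ≥0∞ :=
  outerRokhlin G {A | MeasurableSet[S] A} F μ

/-- The action of `G` on `(X, μ)` is probability-measure-preserving. -/
def IsPmp (G : Type*) {X : Type*} [Group G] [MulAction G X] [MeasurableSpace X]
    (μ : Measure X) : Prop :=
  ∀ g : G, MeasurePreserving (fun x => g • x) μ μ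

/-- Aperiodicity: μ-almost-every `G`-orbit is infinite. -/
def Aperiodic (G : Type*) {X : Type*} [Group G] [MulAction G X] [MeasurableSpace X]
    (μ : Measure X) : Prop :=
  ∀ᵐ x ∂μ, (MulAction.orbit G x).Infinite

/-- Ergodicity of a measure: every invariant Borel set is null or conull. -/
def IsErgodicInv (G : Type*) {X : Type*} [Group G] [MulAction G X] [MeasurableSpace X]
    (ν : Measure X) : Prop :=
  ∀ A : Set X, MeasurableSet A → (∀ g : G, (fun x => g • x) ⁻¹' A = A) → ν A = 0 ∨ ν A = 1

/-- `F` is a `G`-invariant σ-algebra. -/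
def InvariantAlg (G : Type*) {X : Type*} (F : MeasurableSpace X) [Group G] [MulAction G X] :
    Prop :=
  ∀ (g : G) (A : Set X), MeasurableSet[F] A → MeasurableSet[F] ((fun x => g • x) ⁻¹' A)

/-- `F` is countably generated. -/
def CountablyGen {X : Type*} (F : MeasurableSpace X) : Prop :=
  ∃ S : Set (Set X), S.Countable ∧ F = MeasurableSpace.generateFrom S

/-- `π` is an ergodic decomposition map for `μ`. -/
def IsErgDecomp (G : Type*) {X : Type*} [Group G] [MulAction G X] [MeasurableSpace X]
    (μ : Measure X) (π : X → Measure X) : Prop :=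
  Measurable π ∧
  (∀ x, IsProbabilityMeasure (π x) ∧ IsPmp G (π x) ∧ IsErgodicInv G (π x)) ∧
  (∀ (g : G) (x : X), π (g • x) = π x) ∧
  (∀ ν : Measure X, IsProbabilityMeasure ν → IsPmp G ν → IsErgodicInv G ν →
      ν {x | π x = ν} = 1) ∧
  (∀ B : Set X, MeasurableSet B → μ B = ∫⁻ x, π x B ∂μ)


open Filter Topology ProbabilityTheory

/-- Logarithmic cost of a natural number. -/
noncomputable def costL (n : ℕ) : ℝ≥0∞ := ENNReal.ofReal (Real.log (1 + n))

/-- Weights. -/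
noncomputable def wtQ (s n : ℕ) : ℝ≥0∞ := ENNReal.ofReal (((1 + n : ℝ) ^ s)⁻¹)

/-- Entropy function on extended nonnegative reals. -/
noncomputable def phiE (p : ℝ≥0∞) : ℝ≥0∞ := ENNReal.ofReal (Real.negMulLog p.toReal)

lemma gibbs_real {p a w : ℝ} (hp : 0 ≤ p) (hpa : p ≤ a) (hw : 1 ≤ w) :
    Real.negMulLog p + p ≤ p * (-Real.log a) + p * Real.log w + a * w⁻¹ := by
  rcases hp.eq_or_lt with rfl | hp
  · simp
    positivity
  have ha : 0 < a := hp.trans_le hpa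
  have hw0 : 0 < w := by linarith
  have h := Real.log_le_sub_one_of_pos (x := a * w⁻¹ / p) (by positivity)
  rw [Real.log_div (by positivity) hp.ne', Real.log_mul ha.ne' (by positivity), Real.log_inv] at h
  have h2 := mul_le_mul_of_nonneg_left h hp.le
  have h3 : p * (a * w⁻¹ / p - 1) = a * w⁻¹ - p := by field_simp
  rw [h3] at h2
  unfold Real.negMulLog
  nlinarith

lemma gibbs_enn {p a : ℝ≥0∞} (hpa : p ≤ a) (ha : a ≤ 1) (s j : ℕ) :
    phiE p + p ≤ p * ENNReal.ofReal (-Real.log a.toReal) + p * (s * costL j) + a * wtQ s j := by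
  have ha' : a ≠ ⊤ := ne_top_of_le_ne_top ENNReal.one_ne_top ha
  have hp' : p ≠ ⊤ := ne_top_of_le_ne_top ha' hpa
  lift a to NNReal using ha'
  lift p to NNReal using hp'
  have hpa' : (p : ℝ) ≤ a := by exact_mod_cast hpa
  have ha1 : (a : ℝ) ≤ 1 := by exact_mod_cast ha
  have h1j : (1 : ℝ) ≤ 1 + j := by simp
  have hw : (1 : ℝ) ≤ (1 + j : ℝ) ^ s := one_le_pow₀ h1j
  have hlj : 0 ≤ Real.log (1 + j : ℝ) := Real.log_nonneg h1j
  have hla : 0 ≤ - Real.log (a : ℝ) := by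
    have := Real.log_nonpos a.coe_nonneg ha1
    simpa using this
  have h := gibbs_real p.coe_nonneg hpa' hw
  simp only [phiE, costL, wtQ, ENNReal.coe_toReal]
  rw [← ENNReal.ofReal_coe_nnreal (p := p), ← ENNReal.ofReal_coe_nnreal (p := a),
    ← ENNReal.ofReal_natCast s,
    ← ENNReal.ofReal_mul (by positivity), ← ENNReal.ofReal_mul (by positivity),
    ← ENNReal.ofReal_mul (by positivity), ← ENNReal.ofReal_mul (by positivity),
    ← ENNReal.ofReal_add (Real.negMulLog_nonneg p.coe_nonneg (hpa'.trans ha1)) p.coe_nonneg,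
    ← ENNReal.ofReal_add (by positivity) (by positivity),
    ← ENNReal.ofReal_add (by positivity) (by positivity)]
  apply ENNReal.ofReal_le_ofReal
  rw [Real.log_pow] at h
  exact h

lemma phiE_eq {p : ℝ≥0∞} (hp : p ≤ 1) : phiE p = p * ENNReal.ofReal (-Real.log p.toReal) := by
  have hp' : p ≠ ⊤ := ne_top_of_le_ne_top ENNReal.one_ne_top hp
  lift p to NNReal using hp'
  simp only [phiE, ENNReal.coe_toReal]
  rw [← ENNReal.ofReal_coe_nnreal (p := p), ← ENNReal.ofReal_mul p.coe_nonneg, Real.negMulLog]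
  simp

lemma phiE_le_one {p : ℝ≥0∞} (hp : p ≤ 1) : phiE p ≤ 1 := by
  have := gibbs_enn hp le_rfl 0 0
  simp [wtQ] at this
  exact le_self_add.trans this

lemma tsum_wtQ_ne_top : ∑' n, wtQ 2 n ≠ ⊤ := by
  unfold wtQ
  have : Summable (fun n : ℕ => (((1 + n : ℝ)) ^ 2)⁻¹) := by
    have := (summable_nat_add_iff 1).mpr (Real.summable_nat_pow_inv.mpr (by norm_num : 1 < 2))
    refine this.congr fun n => ?_
    push_cast
    ring_nf
  exact this.tsum_ofReal_ne_top

/-- the weights have total mass close to one for large exponents -/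
lemma exists_tsum_wtQ {ε : ℝ≥0∞} (hε : ε ≠ 0) : ∃ s : ℕ, ∑' n, wtQ s n ≤ 1 + ε := by
  set Z := ∑' n, wtQ 2 n with hZ
  have hb : ∀ s, ∑' n, wtQ (s + 2) n ≤ 1 + ENNReal.ofReal ((1/2)^s) * Z := by
    intro s
    rw [tsum_eq_zero_add' ENNReal.summable]
    refine add_le_add (by simp [wtQ]) ?_
    have : ∀ n, wtQ (s + 2) (n + 1) ≤ ENNReal.ofReal ((1/2)^s) * wtQ 2 (n + 1) := by
      intro n
      unfold wtQ
      rw [← ENNReal.ofReal_mul (by positivity)]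
      apply ENNReal.ofReal_le_ofReal
      rw [pow_add, mul_inv, ← inv_pow]
      have : (1 + ((n + 1 : ℕ) : ℝ))⁻¹ ≤ 1/2 := by
        rw [one_div]
        apply inv_anti₀ (by norm_num)
        push_cast
        linarith [(Nat.cast_nonneg n : (0:ℝ) ≤ n)]
      gcongr
    refine (ENNReal.tsum_le_tsum this).trans ?_
    rw [ENNReal.tsum_mul_left]
    gcongr
    have hZ2 : Z = wtQ 2 0 + ∑' n, wtQ 2 (n + 1) := tsum_eq_zero_add' ENNReal.summable
    rw [hZ2]
    exact le_add_self
  have ht : Tendsto (fun s : ℕ => ENNReal.ofReal ((1/2)^s) * Z) atTop (𝓝 0) := by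
    have h1 : Tendsto (fun s : ℕ => ENNReal.ofReal ((1/2)^s)) atTop (𝓝 0) := by
      rw [← ENNReal.ofReal_zero]
      exact ENNReal.tendsto_ofReal
        (tendsto_pow_atTop_nhds_zero_of_lt_one (by norm_num) (by norm_num))
    simpa using ENNReal.Tendsto.mul_const h1 (Or.inr tsum_wtQ_ne_top)
  obtain ⟨s, hs⟩ := (ht.eventually (gt_mem_nhds (pos_iff_ne_zero.mpr hε))).exists
  exact ⟨s + 2, (hb s).trans (by gcongr)⟩

/-- iterated second components -/
def tl : ℕ → ℕ := fun n => n.unpair.2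
def dec (k n : ℕ) : ℕ := ((tl^[k]) n).unpair.1

lemma costL_pair (a b : ℕ) : costL (Nat.pair a b) ≤ 2 * costL a + 2 * costL b := by
  have hM : ∀ M : ℕ, costL ((M + 1)^2 - 1) = 2 * costL M := by
    intro M
    unfold costL
    rw [Nat.cast_sub (Nat.one_le_pow _ _ (by omega))]
    push_cast
    rw [show (2 : ℝ≥0∞) = ENNReal.ofReal 2 by simp, ← ENNReal.ofReal_mul (by norm_num)]
    congr 1
    rw [show (1 + ((M + 1 : ℝ)^2 - 1)) = (1 + M)^2 by ring, Real.log_pow]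
    norm_num
  have hmono : Monotone costL := by
    intro m n h
    unfold costL
    apply ENNReal.ofReal_le_ofReal
    apply Real.log_le_log (by positivity)
    gcongr
  have h1 : costL (Nat.pair a b) ≤ 2 * costL (max a b) := by
    rw [← hM]
    apply hmono
    have := Nat.pair_lt_max_add_one_sq a b
    omega
  refine h1.trans ?_
  rcases le_total a b with h | h
  · rw [max_eq_right h]; exact le_add_self
  · rw [max_eq_left h]; exact le_self_add

/-- finitely supported sequences can be encoded with controlled cost -/
lemma exists_code (K : ℕ) : ∀ (w : ℕ → ℕ), (∀ k, K ≤ k → w k = 0) →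
    ∃ n, (∀ k, dec k n = w k) ∧ costL n ≤ ∑' k, 2 ^ (k + 1) * costL (w k) := by
  induction K with
  | zero =>
    intro w hw
    refine ⟨0, fun k => ?_, by simp [costL]⟩
    rw [hw k (Nat.zero_le _)]
    have : tl^[k] 0 = 0 := Function.iterate_fixed (by simp [tl]) k
    simp [dec, this]
  | succ K ih =>
    intro w hw
    obtain ⟨n, hn, hc⟩ := ih (fun k => w (k + 1)) (fun k hk => hw _ (by omega))
    refine ⟨Nat.pair (w 0) n, fun k => ?_, ?_⟩
    · cases k with
      | zero => simp [dec]
      | succ k =>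
        rw [← hn k]
        simp [dec, tl]
    · rw [tsum_eq_zero_add' ENNReal.summable]
      refine (costL_pair _ _).trans (add_le_add (by simp) ?_)
      refine (mul_le_mul_right hc 2).trans ?_
      rw [← ENNReal.tsum_mul_left]
      refine ENNReal.tsum_le_tsum fun k => ?_
      rw [← mul_assoc]
      gcongr
      exact le_of_eq (by ring)

lemma exists_joint_code {X : Type*} [MeasurableSpace X] (μ : Measure X)
    (r : ℕ → X → ℕ) (hr : ∀ k, Measurable (r k))
    (hs : ∑' k, 2 ^ (k + 1) * ∫⁻ x, costL (r k x) ∂μ ≠ ⊤) :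
    ∃ N : X → ℕ, Measurable N ∧ ∫⁻ x, costL (N x) ∂μ ≠ ⊤ ∧
      ∀ᵐ x ∂μ, ∀ k, r k x = dec k (N x) := by
  classical
  have hmL : ∀ k, Measurable (fun x => costL (r k x)) := fun k =>
    (measurable_from_nat (f := costL)).comp (hr k)
  set T : X → ℝ≥0∞ := fun x => ∑' k, 2 ^ (k + 1) * costL (r k x) with hT
  have hTint : ∫⁻ x, T x ∂μ ≠ ⊤ := by
    rw [hT, lintegral_tsum (fun k => ((hmL k).const_mul _).aemeasurable)]
    simp_rw [lintegral_const_mul _ (hmL _)]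
    exact hs
  have hTm : Measurable T := Measurable.tsum fun k => (hmL k).const_mul _
  have hfin : ∀ᵐ x ∂μ, T x < ⊤ := ae_lt_top hTm hTint
  have key : ∀ x, T x < ⊤ → ∃ n, (∀ k, dec k n = r k x) ∧ costL n ≤ T x := by
    intro x hx
    have h0 := ENNReal.tendsto_atTop_zero_of_tsum_ne_top hx.ne
    have hlog : (0 : ℝ≥0∞) < ENNReal.ofReal (Real.log 2) := by
      simpa using Real.log_pos (by norm_num : (1:ℝ) < 2)
    obtain ⟨K, hK⟩ := eventually_atTop.mp (h0.eventually (gt_mem_nhds hlog))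
    refine exists_code K (fun k => r k x) fun k hk => ?_
    by_contra hne
    refine absurd (hK k hk) (not_lt.mpr ?_)
    have h1 : ENNReal.ofReal (Real.log 2) ≤ costL (r k x) := by
      unfold costL
      apply ENNReal.ofReal_le_ofReal
      apply Real.log_le_log (by norm_num)
      have : (1 : ℝ) ≤ r k x := by exact_mod_cast Nat.one_le_iff_ne_zero.mpr hne
      linarith
    refine h1.trans ?_
    exact le_mul_of_one_le_left zero_le (one_le_pow₀ (by norm_num))
  let P : ℕ → X → Prop := fun n x => (∀ k, dec k n = r k x) ∧ costL n ≤ T x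
  have hP : ∀ n, MeasurableSet {x | P n x} := by
    intro n
    have e : {x | P n x} = (⋂ k, {x | dec k n = r k x}) ∩ {x | costL n ≤ T x} := by
      ext x; simp [P]
    rw [e]
    exact (MeasurableSet.iInter fun k => measurableSet_eq_fun measurable_const (hr k)).inter
      (measurableSet_le measurable_const hTm)
  let N : X → ℕ := fun x => if h : ∃ n, P n x then Nat.find h else 0
  have hN : ∀ x, T x < ⊤ → P (N x) x := by
    intro x hx
    have h := key x hx
    simp only [N]
    rw [dif_pos h]
    exact Nat.find_spec h
  refine ⟨N, ?_, ?_, ?_⟩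
  · have hE : MeasurableSet {x | ∃ n, P n x} := by
      have e : {x | ∃ n, P n x} = ⋃ n, {x | P n x} := by ext x; simp
      rw [e]; exact MeasurableSet.iUnion hP
    let P' : X → ℕ → Prop := fun x n => P n x ∨ ¬ ∃ n, P n x
    have hex : ∀ x, ∃ n, P' x n := by
      intro x
      by_cases h : ∃ n, P n x
      · exact h.imp fun n hn => Or.inl hn
      · exact ⟨0, Or.inr h⟩
    have : N = fun x => Nat.find (hex x) := by
      funext x
      simp only [N]
      split_ifs with h
      · apply le_antisymm
        · rcases Nat.find_spec (hex x) with h' | h'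
          · exact Nat.find_min' h h'
          · exact absurd h h'
        · exact Nat.find_min' _ (Or.inl (Nat.find_spec h))
      · symm
        rw [Nat.find_eq_zero]
        exact Or.inr h
    rw [this]
    exact measurable_find hex fun k => (hP k).union hE.compl
  · refine ne_top_of_le_ne_top hTint (lintegral_mono_ae ?_)
    filter_upwards [hfin] with x hx using (hN x hx).2
  · filter_upwards [hfin] with x hx k using ((hN x hx).1 k).symm

lemma measurable_phiE : Measurable phiE :=
  (Real.continuous_negMulLog.measurable.comp ENNReal.measurable_toReal).ennreal_ofReal

section kernel

variable {X : Type*} {m : MeasurableSpace X} [mX : MeasurableSpace X] [StandardBorelSpace X]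
  {μ : Measure X} [IsProbabilityMeasure μ]

lemma kerMeas (hm : m ≤ mX) {A : Set X} (hA : MeasurableSet A) :
    Measurable (fun x => condExpKernel μ m x A) :=
  (measurable_condExpKernel hA).mono hm le_rfl

lemma condEnt_eq' (hm : m ≤ mX) {ι : Type*} [Countable ι] (α : ι → Set X)
    (hα : ∀ i, MeasurableSet (α i)) :
    condEnt m μ α = ∫⁻ x, ∑' i, phiE (condExpKernel μ m x (α i)) ∂μ := by
  unfold condEnt
  apply lintegral_congr_ae
  have : ∀ i, (fun ω => (condExpKernel μ m ω).real (α i)) =ᵐ[μ]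
    μ[(α i).indicator (fun _ => (1 : ℝ)) | m] := fun i => condExpKernel_ae_eq_condExp hm (hα i)
  filter_upwards [ae_all_iff.mpr this] with x hx
  congr 1
  funext i
  rw [← hx i]
  rfl

lemma condEnt_eq (hm : m ≤ mX) {ι : Type*} [Countable ι] (α : ι → Set X)
    (hα : ∀ i, MeasurableSet (α i)) :
    condEnt m μ α = ∑' i, ∫⁻ x, phiE (condExpKernel μ m x (α i)) ∂μ := by
  rw [condEnt_eq' hm α hα, lintegral_tsum]
  exact fun i => (measurable_phiE.comp (kerMeas hm (hα i))).aemeasurable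

lemma kernel_setLIntegral (hm : m ≤ mX) {A s : Set X} (hA : MeasurableSet A)
    (hs : MeasurableSet[m] s) :
    ∫⁻ x in s, condExpKernel μ m x A ∂μ = μ (s ∩ A) := by
  have h := congrArg (fun ν => ν (s ×ˢ A)) (compProd_trim_condExpKernel (μ := μ) hm)
  rw [Measure.compProd_apply_prod hs hA, Measure.map_apply, restrict_trim hm μ hs,
    lintegral_trim hm (measurable_condExpKernel hA)] at h
  · rw [h]; rfl
  · exact (measurable_id'' hm).prodMk measurable_id
  · exact hs.prod hA

lemma kernel_pullout (hm : m ≤ mX) {A : Set X} (hA : MeasurableSet A)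
    {f : X → ℝ≥0∞} (hf : Measurable[m] f) :
    ∫⁻ x, condExpKernel μ m x A * f x ∂μ = ∫⁻ x in A, f x ∂μ := by
  have e : (μ.restrict A).trim hm = (μ.withDensity (fun x => condExpKernel μ m x A)).trim hm := by
    refine @Measure.ext _ m _ _ fun s hs => ?_
    rw [trim_measurableSet_eq hm hs, trim_measurableSet_eq hm hs, withDensity_apply _ (hm s hs),
      kernel_setLIntegral hm hA hs, Measure.restrict_apply (hm s hs)]
  rw [← lintegral_trim hm hf, e, lintegral_trim hm hf,
    lintegral_withDensity_eq_lintegral_mul _ (kerMeas hm hA) (hf.mono hm le_rfl)]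
  rfl

lemma kernel_lintegral (hm : m ≤ mX) {A : Set X} (hA : MeasurableSet A) :
    ∫⁻ x, condExpKernel μ m x A ∂μ = μ A := by
  simpa using kernel_setLIntegral (μ := μ) hm hA MeasurableSet.univ

end kernel

/-- join of a partition and a function -/
def joinP {X : Type*} (α : ℕ → Set X) (r : X → ℕ) : ℕ → Set X :=
  fun n => α n.unpair.1 ∩ r ⁻¹' {n.unpair.2}

lemma joinP_partition {X : Type*} [MeasurableSpace X] {α : ℕ → Set X} {r : X → ℕ}
    (hα : IsPartition α) (hr : Measurable r) : IsPartition (joinP α r) := by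
  refine ⟨fun n => (hα.1 _).inter (hr (measurableSet_singleton _)), ?_, ?_⟩
  · intro a b hab
    rw [Function.onFun, Set.disjoint_left]
    rintro x ⟨h1, h2⟩ ⟨h3, h4⟩
    apply hab
    rw [← Nat.pair_unpair a, ← Nat.pair_unpair b]
    have e1 : a.unpair.1 = b.unpair.1 := by
      by_contra hne
      exact Set.disjoint_left.mp (hα.2.1 hne) h1 h3
    have e2 : a.unpair.2 = b.unpair.2 := by
      simp only [mem_preimage, mem_singleton_iff] at h2 h4
      rw [← h2, ← h4]
    rw [e1, e2]
  · refine eq_univ_of_forall fun x => ?_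
    have : x ∈ ⋃ i, α i := by rw [hα.2.2]; trivial
    obtain ⟨i, hi⟩ := mem_iUnion.mp this
    exact mem_iUnion.mpr ⟨Nat.pair i (r x), by simp [joinP, hi]⟩

lemma tsum_measure_inter {X : Type*} [MeasurableSpace X] (ν : Measure X) {α : ℕ → Set X}
    (hα : IsPartition α) {A : Set X} (hA : MeasurableSet A) : ∑' i, ν (α i ∩ A) = ν A := by
  rw [← measure_iUnion, ← iUnion_inter, hα.2.2, univ_inter]
  · intro i j hij
    exact (hα.2.1 hij).mono inter_subset_left inter_subset_left
  · exact fun i => (hα.1 i).inter hA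

lemma fun_partition {X : Type*} [MeasurableSpace X] {r : X → ℕ} (hr : Measurable r) :
    IsPartition (fun j => r ⁻¹' {j}) := by
  refine ⟨fun j => hr (measurableSet_singleton _), ?_, ?_⟩
  · intro i j hij
    rw [Function.onFun, Set.disjoint_left]
    intro x h1 h2
    simp only [mem_preimage, mem_singleton_iff] at h1 h2
    exact hij (h1.symm.trans h2)
  · exact eq_univ_of_forall fun x => mem_iUnion.mpr ⟨r x, rfl⟩

lemma gibbs_pointwise {X : Type*} [MeasurableSpace X] (ν : Measure X) [IsProbabilityMeasure ν]
    {α : ℕ → Set X} {r : X → ℕ} (hα : IsPartition α) (hr : Measurable r) (s : ℕ) :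
    (∑' n, phiE (ν (joinP α r n))) + 1 ≤
      (∑' i, phiE (ν (α i))) + (∑' j, ν (r ⁻¹' {j}) * (s * costL j)) + ∑' j, wtQ s j := by
  have hj := fun_partition hr
  have hpair : ∀ f : ℕ → ℕ → ℝ≥0∞, ∑' n : ℕ, f n.unpair.1 n.unpair.2 = ∑' i, ∑' j, f i j := by
    intro f
    rw [← ENNReal.tsum_prod, ← Nat.pairEquiv.symm.tsum_eq (fun p : ℕ × ℕ => f p.1 p.2)]
    rfl
  have h1 : ∀ i, ∑' j, ν (α i ∩ r ⁻¹' {j}) = ν (α i) := by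
    intro i
    simpa only [inter_comm] using tsum_measure_inter ν hj (hα.1 i)
  have hsum : ∑' i, ν (α i) = 1 := by
    simpa using tsum_measure_inter ν hα MeasurableSet.univ
  have e1 : (∑' n, phiE (ν (joinP α r n))) + 1 =
      ∑' i, ∑' j, (phiE (ν (α i ∩ r ⁻¹' {j})) + ν (α i ∩ r ⁻¹' {j})) := by
    simp_rw [ENNReal.tsum_add, h1, hsum]
    rw [← hpair (fun i j => phiE (ν (α i ∩ r ⁻¹' {j})))]
    rfl
  have e2 : (∑' i, phiE (ν (α i))) + (∑' j, ν (r ⁻¹' {j}) * (s * costL j)) + ∑' j, wtQ s j =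
      ∑' i, ∑' j, (ν (α i ∩ r ⁻¹' {j}) * ENNReal.ofReal (-Real.log (ν (α i)).toReal)
        + ν (α i ∩ r ⁻¹' {j}) * (s * costL j) + ν (α i) * wtQ s j) := by
    simp_rw [ENNReal.tsum_add, ENNReal.tsum_mul_left, ENNReal.tsum_mul_right, h1, hsum, one_mul]
    congr 2
    · exact tsum_congr fun i => phiE_eq prob_le_one
    · rw [ENNReal.tsum_comm]
      refine tsum_congr fun j => ?_
      rw [ENNReal.tsum_mul_right, tsum_measure_inter ν hα (hj.1 j)]
  rw [e1, e2]
  exact ENNReal.tsum_le_tsum fun i => ENNReal.tsum_le_tsum fun j =>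
    gibbs_enn (measure_mono inter_subset_left) prob_le_one s j

lemma lintegral_comp_fun {X : Type*} [MeasurableSpace X] (μ : Measure X) {r : X → ℕ}
    (hr : Measurable r) (f : ℕ → ℝ≥0∞) : ∫⁻ x, f (r x) ∂μ = ∑' j, f j * μ (r ⁻¹' {j}) := by
  rw [← lintegral_map (measurable_from_nat (f := f)) hr, lintegral_countable']
  exact tsum_congr fun j => by rw [Measure.map_apply hr (measurableSet_singleton _)]

lemma condEnt_join {X : Type*} {m : MeasurableSpace X} [mX : MeasurableSpace X]
    [StandardBorelSpace X] {μ : Measure X} [IsProbabilityMeasure μ] (hm : m ≤ mX)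
    {α : ℕ → Set X} {r : X → ℕ} (hα : IsPartition α) (hr : Measurable r) (s : ℕ) :
    condEnt m μ (joinP α r) + 1 ≤
      condEnt m μ α + s * ∫⁻ x, costL (r x) ∂μ + ∑' j, wtQ s j := by
  rw [condEnt_eq' hm _ (joinP_partition hα hr).1, condEnt_eq' hm _ hα.1]
  have h := lintegral_mono (μ := μ)
    (fun x => gibbs_pointwise (condExpKernel μ m x) hα hr s)
  have hj := fun_partition hr
  have hms : ∀ α : ℕ → Set X, (∀ i, MeasurableSet (α i)) →
      Measurable fun x => ∑' i, phiE (condExpKernel μ m x (α i)) := fun α hα =>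
    Measurable.tsum fun i => measurable_phiE.comp (kerMeas hm (hα i))
  have hm2 : ∀ j, Measurable fun x => condExpKernel μ m x (r ⁻¹' {j}) * (s * costL j) :=
    fun j => (kerMeas hm (hj.1 j)).mul_const _
  rw [lintegral_add_right _ measurable_const, lintegral_add_right _ measurable_const,
    lintegral_add_left (hms _ hα.1), lintegral_tsum (fun j => (hm2 j).aemeasurable)] at h
  simp only [lintegral_const, measure_univ, mul_one] at h
  refine h.trans (le_of_eq ?_)
  congr 2
  rw [lintegral_comp_fun μ hr, ← ENNReal.tsum_mul_left]
  refine tsum_congr fun j => ?_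
  rw [lintegral_mul_const _ (kerMeas hm (hj.1 j)), kernel_lintegral hm (hj.1 j)]
  ring

/-- strict ranking relation: `j` comes before `i` -/
def rkB (q : ℕ → ℝ≥0∞) (i j : ℕ) : Prop := q i < q j ∨ (q j = q i ∧ j < i)

open Classical in
noncomputable def rkR (q : ℕ → ℝ≥0∞) (i : ℕ) : ℝ≥0∞ := ∑' j, if rkB q i j then 1 else 0

lemma rkR_mul (q : ℕ → ℝ≥0∞) (hq : ∑' j, q j = 1) (i : ℕ) : (rkR q i + 1) * q i ≤ 1 := by
  classical
  have h1 : q i = ∑' j, if j = i then q i else 0 := by rw [tsum_ite_eq]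
  rw [add_mul, one_mul]
  nth_rw 2 [h1]
  rw [rkR, ← ENNReal.tsum_mul_right, ← ENNReal.tsum_add]
  refine le_trans ?_ hq.le
  refine ENNReal.tsum_le_tsum fun j => ?_
  by_cases hji : j = i
  · subst hji
    have : ¬ rkB q j j := by simp [rkB]
    simp [this]
  · by_cases hb : rkB q i j
    · simp only [hb, hji, if_true, if_false, one_mul, add_zero]
      rcases hb with h | h
      · exact h.le
      · exact h.1.ge
    · simp [hb, hji]

lemma rkR_succ (q : ℕ → ℝ≥0∞) {i i' : ℕ} (h : rkB q i' i) : rkR q i + 1 ≤ rkR q i' := by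
  classical
  have h1 : (1 : ℝ≥0∞) = ∑' j, if j = i then 1 else 0 := by rw [tsum_ite_eq]
  nth_rw 1 [h1]
  rw [rkR, rkR, ← ENNReal.tsum_add]
  refine ENNReal.tsum_le_tsum fun j => ?_
  by_cases hji : j = i
  · subst hji
    have : ¬ rkB q j j := by simp [rkB]
    simp [this, h]
  · by_cases hb : rkB q i j
    · have : rkB q i' j := by
        unfold rkB at *
        rcases h with h | h <;> rcases hb with hb | hb
        · exact Or.inl (h.trans hb)
        · exact Or.inl (by rw [hb.1]; exact h)
        · exact Or.inl (by rw [← h.1]; exact hb)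
        · exact Or.inr ⟨hb.1.trans h.1, hb.2.trans h.2⟩
      simp [hb, hji, this]
    · simp [hb, hji]

lemma rkR_ne (q : ℕ → ℝ≥0∞) {i i' : ℕ} (hi : rkR q i ≠ ⊤) (hne : i ≠ i') :
    rkR q i ≠ rkR q i' := by
  intro he
  have htot : rkB q i' i ∨ rkB q i i' := by
    unfold rkB
    rcases lt_trichotomy (q i) (q i') with h | h | h
    · exact Or.inr (Or.inl h)
    · rcases lt_or_gt_of_ne hne with h' | h'
      · exact Or.inl (Or.inr ⟨h, h'⟩)
      · exact Or.inr (Or.inr ⟨h.symm, h'⟩)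
    · exact Or.inl (Or.inl h)
  have hlt : rkR q i < rkR q i + 1 := ENNReal.lt_add_right hi one_ne_zero
  rcases htot with h | h
  · have := rkR_succ q h
    rw [← he] at this
    exact absurd this (not_le.mpr hlt)
  · have := rkR_succ q h
    rw [← he] at this
    exact absurd this (not_le.mpr hlt)

lemma rkR_nat (q : ℕ → ℝ≥0∞) {i : ℕ} (hi : rkR q i ≠ ⊤) :
    ((⌊(rkR q i).toReal⌋₊ : ℕ) : ℝ≥0∞) = rkR q i := by
  classical
  have e : rkR q i = ({j | rkB q i j} : Set ℕ).encard := by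
    rw [← ENNReal.tsum_set_one, tsum_subtype {j | rkB q i j} (fun _ => (1 : ℝ≥0∞)), rkR]
    exact tsum_congr fun j => by simp [Set.indicator]
  rw [e] at hi ⊢
  have hfin : ({j | rkB q i j} : Set ℕ).Finite := by
    rw [← Set.encard_ne_top_iff]
    intro h
    rw [h] at hi
    simp at hi
  rw [← hfin.cast_ncard_eq]
  simp

lemma measurable_rkR {X : Type*} [MeasurableSpace X] (p : X → ℕ → ℝ≥0∞)
    (hpm : ∀ j, Measurable (fun x => p x j)) (i : ℕ) : Measurable (fun x => rkR (p x) i) := by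
  classical
  unfold rkR
  refine Measurable.tsum (fun j => ?_)
  refine Measurable.ite ?_ measurable_const measurable_const
  have e : {x | rkB (p x) i j} = {x | p x i < p x j} ∪ ({x | p x j = p x i} ∩ {x | j < i}) := by
    ext x; rfl
  rw [e]
  exact (measurableSet_lt (hpm i) (hpm j)).union
    ((measurableSet_eq_fun (hpm j) (hpm i)).inter (MeasurableSet.const _))

lemma rank_code {X : Type*} {m : MeasurableSpace X} [mX : MeasurableSpace X]
    [StandardBorelSpace X] {μ : Measure X} [IsProbabilityMeasure μ] (hm : m ≤ mX)
    {α : ℕ → Set X} (hα : IsPartition α) :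
    ∃ r : X → ℕ, Measurable r ∧ ∫⁻ x, costL (r x) ∂μ ≤ condEnt m μ α ∧
      ∀ i, ∃ T, MeasurableSet[MeasurableSpace.comap r ⊤ ⊔ m] T ∧ α i =ᵐ[μ] T := by
  classical
  set p : X → ℕ → ℝ≥0∞ := fun x j => condExpKernel μ m x (α j) with hp
  have hpm : ∀ j, Measurable[m] (fun x => p x j) := fun j => measurable_condExpKernel (hα.1 j)
  have hp1 : ∀ x, ∑' j, p x j = 1 := fun x => by
    simpa using tsum_measure_inter (condExpKernel μ m x) hα MeasurableSet.univ
  have hRm : ∀ i, Measurable[m] (fun x => rkR (p x) i) := by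
    exact fun i => @measurable_rkR X m p hpm i
  have hb : ∀ x, ∃ i, x ∈ α i := fun x => by
    have : x ∈ ⋃ i, α i := by rw [hα.2.2]; trivial
    exact mem_iUnion.mp this
  choose b hb using hb
  have hbu : ∀ x i, x ∈ α i → b x = i := by
    intro x i hi
    by_contra hne
    exact Set.disjoint_left.mp (hα.2.1 hne) (hb x) hi
  have hbpre : ∀ i, b ⁻¹' {i} = α i := by
    intro i
    ext x
    simp only [mem_preimage, mem_singleton_iff]
    exact ⟨fun h => h ▸ hb x, hbu x i⟩
  have hbm : Measurable b := measurable_to_countable' fun i => by rw [hbpre]; exact hα.1 i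
  have hcomp : ∀ {β : Type} [MeasurableSpace β] (f : X → ℕ → β),
      (∀ i, Measurable (fun x => f x i)) → Measurable fun x => f x (b x) := by
    intro β _ f hf
    have : Measurable (fun z : X × ℕ => f z.1 z.2) := measurable_from_prod_countable_left hf
    exact this.comp (measurable_id.prodMk hbm)
  let r : X → ℕ := fun x => ⌊(rkR (p x) (b x)).toReal⌋₊
  have hr : Measurable r := by
    have h : Measurable fun x => rkR (p x) (b x) :=
      hcomp (fun x i => rkR (p x) i) (fun i => (hRm i).mono hm le_rfl)
    exact Nat.measurable_floor.comp h.ennreal_toReal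
  have hpos : ∀ᵐ x ∂μ, p x (b x) ≠ 0 := by
    have : ∀ i, ∀ᵐ x ∂μ, x ∈ α i → p x i ≠ 0 := by
      intro i
      have hs : MeasurableSet[m] {x | p x i = 0} := hpm i (measurableSet_singleton 0)
      have h := kernel_setLIntegral (μ := μ) hm (hα.1 i) hs
      rw [setLIntegral_congr_fun (g := fun _ => 0) (hm _ hs) (fun x hx => hx)] at h
      simp only [lintegral_zero] at h
      rw [ae_iff]
      refine measure_mono_null ?_ h.symm
      intro x hx
      change ¬ (x ∈ α i → p x i ≠ 0) at hx
      simp only [not_forall, not_not] at hx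
      obtain ⟨h1, h2⟩ := hx
      exact ⟨h2, h1⟩
    filter_upwards [ae_all_iff.mpr this] with x hx using hx _ (hb x)
  have hfin : ∀ x, p x (b x) ≠ 0 → rkR (p x) (b x) ≠ ⊤ := by
    intro x hx htop
    have := rkR_mul (p x) (hp1 x) (b x)
    rw [htop] at this
    simp [ENNReal.top_mul hx] at this
  refine ⟨r, hr, ?_, fun i => ⟨{x | (r x : ℝ≥0∞) = rkR (p x) i}, ?_, ?_⟩⟩
  · have hle : ∫⁻ x, costL (r x) ∂μ ≤ ∫⁻ x, ENNReal.ofReal (-Real.log (p x (b x)).toReal) ∂μ := by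
      refine lintegral_mono_ae ?_
      filter_upwards [hpos] with x hx
      have h := rkR_mul (p x) (hp1 x) (b x)
      rw [← rkR_nat _ (hfin x hx)] at h
      have hle1 : p x (b x) ≤ 1 := prob_le_one
      have htop : p x (b x) ≠ ⊤ := ne_top_of_le_ne_top ENNReal.one_ne_top hle1
      have h' := ENNReal.toReal_mono ENNReal.one_ne_top h
      rw [ENNReal.toReal_mul] at h'
      have hpr : 0 < (p x (b x)).toReal := ENNReal.toReal_pos hx htop
      have e3 : (((r x : ℕ) : ℝ≥0∞) + 1).toReal = 1 + (r x : ℝ) := by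
        rw [ENNReal.toReal_add (by simp) (by simp)]; simp [add_comm]
      have h'' : (1 + (r x : ℝ)) * (p x (b x)).toReal ≤ 1 := by
        rw [← e3]; simpa using h'
      unfold costL
      apply ENNReal.ofReal_le_ofReal
      have hl := Real.log_nonpos (by positivity) h''
      rw [Real.log_mul (by positivity) hpr.ne'] at hl
      linarith
    refine hle.trans (le_of_eq ?_)
    rw [condEnt_eq hm _ hα.1, ← setLIntegral_univ, ← hα.2.2, lintegral_iUnion hα.1 hα.2.1]
    refine tsum_congr fun i => ?_
    have e1 : ∀ x, phiE (condExpKernel μ m x (α i)) =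
        condExpKernel μ m x (α i) * ENNReal.ofReal (-Real.log (p x i).toReal) :=
      fun x => phiE_eq prob_le_one
    simp_rw [e1]
    rw [kernel_pullout hm (hα.1 i)]
    · refine setLIntegral_congr_fun (hα.1 i) fun x hx => ?_
      rw [hbu x i hx]
    · exact ((hpm i).ennreal_toReal.log.neg).ennreal_ofReal
  · refine measurableSet_eq_fun ?_ ((hRm i).mono le_sup_right le_rfl)
    have : Measurable[MeasurableSpace.comap r ⊤] (fun x => (r x : ℝ≥0∞)) :=
      (measurable_from_top (f := fun n : ℕ => (n : ℝ≥0∞))).comp (comap_measurable r)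
    exact this.mono le_sup_left le_rfl
  · filter_upwards [hpos] with x hx
    apply propext
    change x ∈ α i ↔ (r x : ℝ≥0∞) = rkR (p x) i
    simp only [r]
    rw [rkR_nat _ (hfin x hx)]
    constructor
    · intro h; rw [hbu x i h]
    · intro h
      by_contra hne
      refine rkR_ne (p x) (hfin x hx) ?_ h
      intro he
      exact hne (he ▸ hb x)

lemma condEnt_tendsto {X : Type*} [mX : MeasurableSpace X]
    [StandardBorelSpace X] {μ : Measure X} [IsProbabilityMeasure μ]
    (ms : ℕ → MeasurableSpace X) (hmono : Monotone ms) (hle : ∀ n, ms n ≤ mX)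
    {r : X → ℕ} (hr : Measurable r) (hL : ∫⁻ x, costL (r x) ∂μ ≠ ⊤)
    (hT : ∀ j, ∃ T, MeasurableSet[⨆ n, ms n] T ∧ (r ⁻¹' {j} : Set X) =ᵐ[μ] T) :
    Tendsto (fun n => condEnt (ms n) μ (fun j => r ⁻¹' {j})) atTop (𝓝 0) := by
  have hj := fun_partition hr
  simp_rw [condEnt_eq (hle _) _ hj.1]
  set a : ℕ → ℕ → ℝ≥0∞ := fun n j => ∫⁻ x, phiE (condExpKernel μ (ms n) x (r ⁻¹' {j})) ∂μ with ha
  have hbound : ∀ n j, a n j ≤ 2 * (costL j * μ (r ⁻¹' {j})) + wtQ 2 j := by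
    intro n j
    have h1 : ∀ x, phiE (condExpKernel μ (ms n) x (r ⁻¹' {j})) ≤
        condExpKernel μ (ms n) x (r ⁻¹' {j}) * (2 * costL j) + wtQ 2 j := by
      intro x
      have := gibbs_enn (p := condExpKernel μ (ms n) x (r ⁻¹' {j})) (a := 1) prob_le_one le_rfl 2 j
      simp at this
      exact le_self_add.trans this
    refine (lintegral_mono h1).trans (le_of_eq ?_)
    rw [lintegral_add_right _ measurable_const, lintegral_mul_const _ (kerMeas (hle n) (hj.1 j)),
      kernel_lintegral (hle n) (hj.1 j)]
    simp
    ring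
  have hlim : ∀ j, Tendsto (fun n => a n j) atTop (𝓝 0) := by
    intro j
    let 𝓕 : Filtration ℕ mX := ⟨ms, hmono, hle⟩
    obtain ⟨T, hTm, hTe⟩ := hT j
    have hsup : (⨆ n, ms n) ≤ mX := iSup_le hle
    have hlev := tendsto_ae_condExp (μ := μ) (ℱ := 𝓕) ((r ⁻¹' {j}).indicator fun _ => (1 : ℝ))
    have hce : μ[(r ⁻¹' {j}).indicator (fun _ => (1 : ℝ)) | ⨆ n, ms n] =ᵐ[μ]
        T.indicator fun _ => (1 : ℝ) := by
      have e1 : (r ⁻¹' {j}).indicator (fun _ => (1 : ℝ)) =ᵐ[μ] T.indicator fun _ => (1 : ℝ) :=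
        indicator_ae_eq_of_ae_eq_set hTe
      refine (condExp_congr_ae e1).trans ?_
      rw [condExp_of_stronglyMeasurable hsup]
      · exact stronglyMeasurable_const.indicator hTm
      · exact (integrable_const 1).indicator (hsup _ hTm)
    have hk : ∀ n, (fun ω => (condExpKernel μ (ms n) ω).real (r ⁻¹' {j})) =ᵐ[μ]
      μ[(r ⁻¹' {j}).indicator (fun _ => (1 : ℝ)) | ms n] :=
        fun n => condExpKernel_ae_eq_condExp (hle n) (hj.1 j)
    have h0 : (0 : ℝ≥0∞) = ∫⁻ x, (0 : ℝ≥0∞) ∂μ := by simp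
    rw [h0]
    refine tendsto_lintegral_of_dominated_convergence (fun _ => 1)
      (fun n => measurable_phiE.comp (kerMeas (hle n) (hj.1 j)))
      (fun n => Eventually.of_forall fun x => phiE_le_one prob_le_one) (by simp) ?_
    filter_upwards [hlev, hce, ae_all_iff.mpr hk] with x h1 h2 h3
    have h1' : Tendsto (fun n => (μ[(r ⁻¹' {j}).indicator (fun _ => (1 : ℝ)) | ms n]) x) atTop
        (𝓝 ((μ[(r ⁻¹' {j}).indicator (fun _ => (1 : ℝ)) | ⨆ n, ms n]) x)) := h1
    rw [h2] at h1'
    simp_rw [← h3] at h1'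
    have h4 := ENNReal.tendsto_ofReal ((Real.continuous_negMulLog.tendsto _).comp h1')
    have h5 : Real.negMulLog (T.indicator (fun _ => (1 : ℝ)) x) = 0 := by
      by_cases hx : x ∈ T <;> simp [hx]
    rw [h5, ENNReal.ofReal_zero] at h4
    exact h4
  have key := tendsto_lintegral_of_dominated_convergence (μ := (Measure.count : Measure ℕ))
    (F := a) (f := fun _ => 0) (fun j => 2 * (costL j * μ (r ⁻¹' {j})) + wtQ 2 j)
    (fun n => measurable_from_nat) (fun n => Eventually.of_forall (hbound n)) ?_
    (Eventually.of_forall hlim)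
  · simpa [lintegral_count] using key
  · rw [lintegral_count, ENNReal.tsum_add, ENNReal.tsum_mul_left, ← lintegral_comp_fun μ hr]
    exact ENNReal.add_ne_top.mpr ⟨ENNReal.mul_ne_top (by simp) hL, tsum_wtQ_ne_top⟩

section alg

/-- completion of a sub-σ-algebra modulo null sets -/
@[reducible] def clo {X : Type*} {mX : MeasurableSpace X} (μ : Measure X) (m : MeasurableSpace X) : MeasurableSpace X :=
  @eventuallyMeasurableSpace X m (ae μ) _

variable {X : Type*} {m m' S S' F : MeasurableSpace X} [mX : MeasurableSpace X] {μ : Measure X}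

lemma mem_clo {A : Set X} :
    MeasurableSet[clo μ m] A ↔ ∃ T, MeasurableSet[m] T ∧ A =ᵐ[μ] T := Iff.rfl

lemma le_clo {X : Type*} {mX : MeasurableSpace X} {μ : Measure X} (m : MeasurableSpace X) : m ≤ clo μ m := fun A hA => ⟨A, hA, ae_eq_refl _⟩

lemma clo_le {X : Type*} {m m' mX : MeasurableSpace X} {μ : Measure X} (h : m ≤ clo μ m') : clo μ m ≤ clo μ m' := by
  rintro A ⟨T, hT, hA⟩
  obtain ⟨S, hS, hT⟩ := h T hT
  exact ⟨S, hS, hA.trans hT⟩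

lemma subsetMod_iff :
    SubsetMod m μ {A | MeasurableSet[S] A} ↔ S ≤ clo μ m := by
  constructor
  · intro h A hA
    obtain ⟨T, hT, h0⟩ := h A hA
    exact ⟨T, hT, measure_symmDiff_eq_zero_iff.mp h0⟩
  · intro h A hA
    obtain ⟨T, hT, h0⟩ := h A hA
    exact ⟨T, hT, measure_symmDiff_eq_zero_iff.mpr h0⟩

variable {G : Type*} [Group G] [MulAction G X]

lemma inv_clo {X : Type*} [MulAction G X] {m mX : MeasurableSpace X} {μ : Measure X} (hpmp : IsPmp G μ) (hm : InvariantAlg G m) :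
    InvariantAlg G (clo μ m) := by
  rintro g A ⟨T, hT, hA⟩
  exact ⟨_, hm g T hT, (hpmp g).quasiMeasurePreserving.preimage_ae_eq hA⟩

lemma inv_iff {X : Type*} [MulAction G X] {m : MeasurableSpace X} :
    InvariantAlg G m ↔ ∀ g : G, m.comap (fun x => g • x) ≤ m := by
  constructor
  · rintro h g _ ⟨A, hA, rfl⟩
    exact h g A hA
  · intro h g A hA
    exact h g _ ⟨A, hA, rfl⟩

lemma invAlg_sup {X : Type*} [MulAction G X] {m m' : MeasurableSpace X}
    (h : InvariantAlg G m) (h' : InvariantAlg G m') :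
    InvariantAlg G (m ⊔ m') := by
  rw [inv_iff] at *
  intro g
  rw [MeasurableSpace.comap_sup]
  exact sup_le_sup (h g) (h' g)

lemma inv_generateFrom {X : Type*} [MulAction G X] {S : Set (Set X)}
    (h : ∀ g : G, ∀ A ∈ S, (fun x => g • x) ⁻¹' A ∈ S) :
    InvariantAlg G (MeasurableSpace.generateFrom S) := by
  rw [inv_iff]
  intro g
  rw [MeasurableSpace.comap_generateFrom]
  apply MeasurableSpace.generateFrom_mono
  rintro _ ⟨A, hA, rfl⟩
  exact h g A hA

lemma inv_invSigma : InvariantAlg G ((@invSigma G X _ _ mX)) := by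
  apply inv_generateFrom
  rintro g A ⟨h1, h2⟩
  rw [h2 g]
  exact ⟨h1, h2⟩

lemma inv_sigmaG {X : Type*} [MulAction G X] (ξ : Set (Set X)) :
    InvariantAlg G (sigmaG G ξ) := by
  apply inv_generateFrom
  rintro g _ ⟨h, A, hA, rfl⟩
  refine ⟨h * g, A, hA, ?_⟩
  ext x
  simp [mul_smul]

lemma sigmaG_le {X : Type*} [MulAction G X] {ξ : Set (Set X)} {m : MeasurableSpace X}
    (hm : InvariantAlg G m) (h : ∀ A ∈ ξ, MeasurableSet[m] A) : sigmaG G ξ ≤ m := by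
  apply MeasurableSpace.generateFrom_le
  rintro _ ⟨g, A, hA, rfl⟩
  exact hm g A (h A hA)

lemma mem_sigmaG {X : Type*} [MulAction G X] {ξ : Set (Set X)} {A : Set X} (hA : A ∈ ξ) :
    MeasurableSet[sigmaG G ξ] A := by
  apply MeasurableSpace.measurableSet_generateFrom
  exact ⟨1, A, hA, by simp⟩

lemma invSigma_le : (@invSigma G X _ _ mX) ≤ mX :=
  MeasurableSpace.generateFrom_le fun _ hA => hA.1

lemma comap_le_of {X : Type*} {r : X → ℕ} {m : MeasurableSpace X}
    (h : ∀ j, MeasurableSet[m] (r ⁻¹' {j})) : MeasurableSpace.comap r ⊤ ≤ m :=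
  Measurable.comap_le (measurable_to_countable' h)

lemma joinP_left {X : Type*} {m : MeasurableSpace X} {α : ℕ → Set X} {r : X → ℕ}
    (h : ∀ n, MeasurableSet[m] (joinP α r n)) (i : ℕ) : MeasurableSet[m] (α i) := by
  have e : α i = ⋃ j, joinP α r (Nat.pair i j) := by
    ext x
    simp [joinP]
  rw [e]
  exact MeasurableSet.iUnion fun j => h _

lemma joinP_right {X : Type*} [MeasurableSpace X] {m : MeasurableSpace X} {α : ℕ → Set X}
    {r : X → ℕ} (hα : (⋃ i, α i) = univ)
    (h : ∀ n, MeasurableSet[m] (joinP α r n)) (j : ℕ) : MeasurableSet[m] (r ⁻¹' {j}) := by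
  have e : r ⁻¹' {j} = ⋃ i, joinP α r (Nat.pair i j) := by
    have : r ⁻¹' {j} = (⋃ i, α i) ∩ r ⁻¹' {j} := by rw [hα, univ_inter]
    rw [this, iUnion_inter]
    simp [joinP]
  rw [e]
  exact MeasurableSet.iUnion fun j => h _

lemma outer_lt {c : ℝ≥0∞} (h : outerRokhlinAlg G S F μ < c) :
    ∃ α, IsPartition α ∧ S ≤ clo μ (sigmaG G (range α) ⊔ F ⊔ (@invSigma G X _ _ mX)) ∧
      condEnt (F ⊔ (@invSigma G X _ _ mX)) μ α < c := by
  obtain ⟨_, ⟨α, h1, h2, rfl⟩, h3⟩ := sInf_lt_iff.mp h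
  exact ⟨α, h1, subsetMod_iff.mp h2, h3⟩

lemma outer_le {α : ℕ → Set X} (h1 : IsPartition α)
    (h2 : S ≤ clo μ (sigmaG G (range α) ⊔ F ⊔ (@invSigma G X _ _ mX))) :
    outerRokhlinAlg G S F μ ≤ condEnt (F ⊔ (@invSigma G X _ _ mX)) μ α :=
  sInf_le ⟨α, h1, subsetMod_iff.mpr h2, rfl⟩

lemma outer_mono (h : S ≤ S') :
    outerRokhlinAlg G S F μ ≤ outerRokhlinAlg G S' F μ := by
  apply sInf_le_sInf
  rintro _ ⟨α, h1, h2, rfl⟩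
  exact ⟨α, h1, fun A hA => h2 A (h A hA), rfl⟩

lemma outer_step [StandardBorelSpace X] [IsProbabilityMeasure μ] (hpmp : IsPmp G μ)
    (hF : F ≤ mX) {c : ℝ≥0∞} (h : outerRokhlinAlg G S F μ < c) :
    ∃ r : X → ℕ, Measurable r ∧ ∫⁻ x, costL (r x) ∂μ < c ∧
      ∀ M : MeasurableSpace X, InvariantAlg G M → F ⊔ (@invSigma G X _ _ mX) ≤ clo μ M →
        (∀ j, MeasurableSet[clo μ M] (r ⁻¹' {j})) → S ≤ clo μ M := by
  obtain ⟨α, h1, h2, h3⟩ := outer_lt h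
  obtain ⟨r, hr, hc, hg⟩ := rank_code (μ := μ) (sup_le hF (invSigma_le (G := G))) h1
  refine ⟨r, hr, hc.trans_lt h3, fun M hM hFM hrM => h2.trans (clo_le ?_)⟩
  rw [sup_assoc]
  refine sup_le (sigmaG_le (inv_clo hpmp hM) ?_) hFM
  rintro _ ⟨i, rfl⟩
  exact clo_le (sup_le (comap_le_of hrM) hFM) _ (hg i)

end alg

section main

variable {G X : Type*} {F S : MeasurableSpace X} [Group G]
    [mX : MeasurableSpace X] [StandardBorelSpace X] [MulAction G X]
    {μ : Measure X} [IsProbabilityMeasure μ]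

lemma tail_small (hpmp : IsPmp G μ)
    (hF : F ≤ mX) (hFinv : InvariantAlg G F)
    (B : ℕ → MeasurableSpace X) (hmono : Monotone B) (hle : ∀ n, B n ≤ mX)
    (hinv : ∀ n, InvariantAlg G (B n)) (hgen : mX ≤ clo μ (⨆ n, B n))
    (hfin : outerRokhlinAlg G mX F μ < ⊤) {ε : ℝ≥0∞} (hε : 0 < ε) :
    ∃ n, outerRokhlinAlg G mX (B n ⊔ F) μ < ε := by
  obtain ⟨r, hr, hc, hM⟩ := outer_step hpmp hF hfin
  have ht := condEnt_tendsto (μ := μ) (fun n => B n ⊔ F ⊔ (@invSigma G X _ _ mX))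
    (fun a b h => sup_le_sup_right (sup_le_sup_right (hmono h) _) _)
    (fun n => sup_le (sup_le (hle n) hF) invSigma_le) hr hc.ne ?_
  · obtain ⟨n, hn⟩ := (ht.eventually (gt_mem_nhds hε)).exists
    refine ⟨n, lt_of_le_of_lt (outer_le (fun_partition hr) ?_) hn⟩
    refine hM _ ?_ ?_ ?_
    · exact invAlg_sup (invAlg_sup (inv_sigmaG _) (invAlg_sup (hinv n) hFinv)) inv_invSigma
    · refine le_trans ?_ (le_clo _)
      exact sup_le (le_sup_of_le_left (le_sup_of_le_right le_sup_right)) le_sup_right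
    · intro j
      have h1 : MeasurableSet[sigmaG G (range fun j => r ⁻¹' {j})] (r ⁻¹' {j}) :=
        mem_sigmaG ⟨j, rfl⟩
      have h2 : sigmaG G (range fun j => r ⁻¹' {j}) ≤
          clo μ (sigmaG G (range fun j => r ⁻¹' {j}) ⊔ (B n ⊔ F) ⊔ (@invSigma G X _ _ mX)) :=
        le_trans (le_sup_of_le_left le_sup_left) (le_clo _)
      exact h2 _ h1
  · intro j
    have h1 : (⨆ n, B n) ≤ ⨆ n, B n ⊔ F ⊔ (@invSigma G X _ _ mX) :=
      iSup_mono fun n => le_sup_of_le_left le_sup_left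
    exact (hgen.trans (clo_le (h1.trans (le_clo _)))) _ (hr (measurableSet_singleton j))

lemma join_finish (hpmp : IsPmp G μ) (hFinv : InvariantAlg G F)
    {α : ℕ → Set X} {r : X → ℕ} (hα : IsPartition α) (hr : Measurable r)
    (h : ∀ M : MeasurableSpace X, InvariantAlg G M → F ⊔ (@invSigma G X _ _ mX) ≤ clo μ M →
      sigmaG G (range α) ≤ clo μ M →
        (∀ j, MeasurableSet[clo μ M] (r ⁻¹' {j})) → S ≤ clo μ M) :
    outerRokhlinAlg G S F μ ≤ condEnt (F ⊔ (@invSigma G X _ _ mX)) μ (joinP α r) := by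
  have h0 : ∀ n, MeasurableSet[clo μ (sigmaG G (range (joinP α r)) ⊔ F ⊔ (@invSigma G X _ _ mX))]
      (joinP α r n) := by
    intro n
    have h2 : sigmaG G (range (joinP α r)) ≤
          clo μ (sigmaG G (range (joinP α r)) ⊔ F ⊔ (@invSigma G X _ _ mX)) :=
        le_trans (le_sup_of_le_left le_sup_left) (le_clo _)
    exact h2 _ (mem_sigmaG ⟨n, rfl⟩)
  have hI := invAlg_sup (invAlg_sup (inv_sigmaG (G := G) (range (joinP α r))) hFinv)
    (inv_invSigma (G := G) (X := X))
  refine outer_le (joinP_partition hα hr) (h _ hI ?_ ?_ ?_)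
  · refine le_trans ?_ (le_clo _)
    exact sup_le (le_sup_of_le_left le_sup_right) le_sup_right
  · refine sigmaG_le (inv_clo hpmp hI) ?_
    rintro _ ⟨i, rfl⟩
    exact joinP_left h0 i
  · exact joinP_right hα.2.2 h0

lemma sup_le_main (hpmp : IsPmp G μ)
    (hF : F ≤ mX) (hFinv : InvariantAlg G F)
    (B : ℕ → MeasurableSpace X) (hmono : Monotone B) (hle : ∀ n, B n ≤ mX)
    (hinv : ∀ n, InvariantAlg G (B n)) (hgen : mX ≤ clo μ (⨆ n, B n))
    (hfin : outerRokhlinAlg G mX F μ < ⊤) :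
    outerRokhlinAlg G mX F μ ≤ ⨆ m, outerRokhlinAlg G (B m) F μ := by
  refine ENNReal.le_of_forall_pos_le_add fun ε hε hlt => ?_
  have hε3 : (0 : ℝ≥0∞) < ε / 3 := ENNReal.div_pos (by exact_mod_cast hε.ne') (by simp)
  obtain ⟨s, hs⟩ := exists_tsum_wtQ hε3.ne'
  obtain ⟨n, hn⟩ := tail_small hpmp hF hFinv B hmono hle hinv hgen hfin
    (ε := ε / 3 / (s + 1)) (ENNReal.div_pos hε3.ne' (by simp))
  obtain ⟨r, hr, hc, hM⟩ := outer_step hpmp (sup_le (hle n) hF) hn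
  have hBn : outerRokhlinAlg G (B n) F μ ≤ ⨆ m, outerRokhlinAlg G (B m) F μ :=
    le_iSup (fun m => outerRokhlinAlg G (B m) F μ) n
  obtain ⟨α, hα, hαg, hαe⟩ := outer_lt (ENNReal.lt_add_right (hBn.trans_lt hlt).ne hε3.ne')
  have h1 := join_finish (μ := μ) (G := G) (S := mX) hpmp hFinv hα hr ?_
  · have h2 := condEnt_join (μ := μ) (sup_le hF (invSigma_le (G := G))) hα hr s
    refine h1.trans ?_
    have h3 : (s : ℝ≥0∞) * ∫⁻ x, costL (r x) ∂μ ≤ ε / 3 := by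
      calc (s : ℝ≥0∞) * ∫⁻ x, costL (r x) ∂μ ≤ (s + 1) * (ε / 3 / (s + 1)) := by
            gcongr
            exact le_self_add
        _ ≤ ε / 3 := ENNReal.mul_div_le
    have h4 : condEnt (F ⊔ (@invSigma G X _ _ mX)) μ (joinP α r) + 1 ≤
        ((⨆ m, outerRokhlinAlg G (B m) F μ) + (ε / 3 + ε / 3 + ε / 3)) + 1 := by
      calc _ ≤ _ := h2
        _ ≤ ((⨆ m, outerRokhlinAlg G (B m) F μ) + ε / 3) + ε / 3 + (1 + ε / 3) := by
          gcongr
          exact hαe.le.trans (by gcongr)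
        _ = _ := by ring
    rw [ENNReal.add_thirds] at h4
    exact (ENNReal.add_le_add_iff_right ENNReal.one_ne_top).mp h4
  · intro M hMi hFM hαM hrM
    refine hM M hMi ?_ hrM
    have hFM' := hFM
    rw [sup_le_iff] at hFM
    refine sup_le (sup_le ?_ hFM.1) hFM.2
    exact hαg.trans (clo_le (sup_le (sup_le hαM hFM.1) hFM.2))

lemma finite_main (hpmp : IsPmp G μ)
    (hF : F ≤ mX) (hFinv : InvariantAlg G F)
    (B : ℕ → MeasurableSpace X) (hmono : Monotone B) (hle : ∀ n, B n ≤ mX)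
    (hgen : mX ≤ clo μ (⨆ n, B n))
    (h0 : (⨅ n, ⨆ m, ⨆ _ : n ≤ m, outerRokhlinAlg G (B m) (B n ⊔ F) μ) = 0)
    (hfin : ∀ m, outerRokhlinAlg G (B m) F μ < ⊤) :
    outerRokhlinAlg G mX F μ < ⊤ := by
  have hw : ∀ k : ℕ, ∃ n, ∀ m, n ≤ m → outerRokhlinAlg G (B m) (B n ⊔ F) μ < (4 ^ (k + 1))⁻¹ := by
    intro k
    have : (⨅ n, ⨆ m, ⨆ _ : n ≤ m, outerRokhlinAlg G (B m) (B n ⊔ F) μ)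
        < (4 ^ (k + 1) : ℝ≥0∞)⁻¹ := by
      rw [h0]
      simp [ENNReal.pow_ne_top]
    obtain ⟨n, hn⟩ := iInf_lt_iff.mp this
    exact ⟨n, fun m hm => lt_of_le_of_lt
      (le_iSup₂ (f := fun m (_ : n ≤ m) => outerRokhlinAlg G (B m) (B n ⊔ F) μ) m hm) hn⟩
  choose nn hnn using hw
  let M : ℕ → ℕ := fun k => k + ∑ i ∈ Finset.range (k + 1), nn i
  have hnM : ∀ k, nn k ≤ M k := fun k =>
    le_add_left (Finset.single_le_sum (f := nn) (fun i _ => Nat.zero_le _) (by simp))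
  have hMM : ∀ k, M k ≤ M (k + 1) := fun k => by
    simp only [M]
    rw [Finset.sum_range_succ _ (k + 1)]
    omega
  have hkM : ∀ k, k ≤ M k := fun k => Nat.le_add_right _ _
  have hst : ∀ k, ∃ r : X → ℕ, Measurable r ∧ ∫⁻ x, costL (r x) ∂μ < (4 ^ (k + 1))⁻¹ ∧
      ∀ L : MeasurableSpace X, InvariantAlg G L → B (nn k) ⊔ F ⊔ (@invSigma G X _ _ mX) ≤ clo μ L →
        (∀ j, MeasurableSet[clo μ L] (r ⁻¹' {j})) → B (M (k + 1)) ≤ clo μ L := fun k =>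
    outer_step hpmp (sup_le (hle _) hF) (hnn k (M (k + 1)) ((hnM k).trans (hMM k)))
  choose r hr hc hg using hst
  obtain ⟨N, hN, hNc, hNd⟩ := exists_joint_code μ r hr (by
    refine ne_top_of_le_ne_top (b := ∑' k : ℕ, (2 : ℝ≥0∞)⁻¹ ^ (k + 1)) ?_
      (ENNReal.tsum_le_tsum fun k => ?_)
    · rw [ENNReal.tsum_geometric_add_one]
      simp [ENNReal.mul_eq_top]
    · refine (mul_le_mul_right (hc k).le _).trans (le_of_eq ?_)
      rw [show (4 : ℝ≥0∞) = 2 * 2 by norm_num, mul_pow, ENNReal.mul_inv (by simp) (by simp),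
        ← mul_assoc, ENNReal.mul_inv_cancel (by simp) (by simp [ENNReal.pow_ne_top]), one_mul,
        ENNReal.inv_pow])
  obtain ⟨α, hα, hαg, hαe⟩ := outer_lt (hfin (M 0))
  have h1 := join_finish (μ := μ) (G := G) (S := mX) hpmp hFinv hα hN ?_
  · have h2 := condEnt_join (μ := μ) (sup_le hF (invSigma_le (G := G))) hα hN 2
    refine h1.trans_lt (lt_of_le_of_lt (le_self_add.trans h2) ?_)
    refine ENNReal.add_lt_top.mpr ⟨ENNReal.add_lt_top.mpr ⟨hαe, ?_⟩, tsum_wtQ_ne_top.lt_top⟩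
    exact ENNReal.mul_lt_top (by simp) hNc.lt_top
  · intro L hLi hFL hαL hNL
    have hFL' := sup_le_iff.mp hFL
    have hrL : ∀ k j, MeasurableSet[clo μ L] (r k ⁻¹' {j}) := by
      intro k j
      have hm : Measurable[clo μ L] N := @measurable_to_countable' _ _ _ _ (clo μ L) _ hNL
      have h3 : MeasurableSet[clo μ L] (N ⁻¹' {n | dec k n = j}) := hm (MeasurableSet.of_discrete)
      obtain ⟨T, hT, hTe⟩ := h3
      refine ⟨T, hT, EventuallyEq.trans ?_ hTe⟩
      filter_upwards [hNd] with x hx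
      apply propext
      change r k x = j ↔ dec k (N x) = j
      rw [hx k]
    have hB : ∀ k, B (M k) ≤ clo μ L := by
      intro k
      induction k with
      | zero => exact hαg.trans (clo_le (sup_le (sup_le hαL hFL'.1) hFL'.2))
      | succ k ih =>
        exact hg k L hLi (sup_le (sup_le ((hmono (hnM k)).trans ih) hFL'.1) hFL'.2) (hrL k)
    exact hgen.trans (clo_le (iSup_le fun n => (hmono (hkM n)).trans (hB n)))

end main

/-- Theorem 6.3, inverse limit formula: for an increasing sequence of
invariant sub-σ-algebras `B n` generating the Borel σ-algebra mod `μ`-null sets,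
finiteness of `rh_G(X,μ|F)` is characterized, and in the finite case
`rh_G(X,μ|F) = sup_m rh_{G,μ}(B m | F)`. -/
theorem statement15 {G X : Type*} (F : MeasurableSpace X) [Group G] [Countable G]
    [mX : MeasurableSpace X] [StandardBorelSpace X] [MulAction G X]
    (μ : Measure X) [IsProbabilityMeasure μ] (hpmp : IsPmp G μ)
    (hF : F ≤ mX) (hFinv : InvariantAlg G F)
    (B : ℕ → MeasurableSpace X) (hmono : Monotone B) (hle : ∀ n, B n ≤ mX)
    (hinv : ∀ n, InvariantAlg G (B n))
    (hgen : ∀ A : Set X, MeasurableSet A →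
      ∃ C, MeasurableSet[⨆ n, B n] C ∧ μ (A ∆ C) = 0) :
    (rokhlin G F μ < ⊤ ↔
        ((⨅ n, ⨆ m, ⨆ _ : n ≤ m, outerRokhlinAlg G (B m) (B n ⊔ F) μ) = 0 ∧
          ∀ m, outerRokhlinAlg G (B m) F μ < ⊤)) ∧
      (rokhlin G F μ < ⊤ →
        rokhlin G F μ = ⨆ m, outerRokhlinAlg G (B m) F μ) := by
  have hgen' : mX ≤ clo μ (⨆ n, B n) := by
    intro A hA
    obtain ⟨C, hC, h0⟩ := hgen A hA
    exact ⟨C, hC, measure_symmDiff_eq_zero_iff.mp h0⟩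
  have hrk : rokhlin G F μ = outerRokhlinAlg G mX F μ := rfl
  rw [hrk]
  refine ⟨⟨fun hfin => ⟨?_, fun m => (outer_mono (hle m)).trans_lt hfin⟩,
    fun h => finite_main hpmp hF hFinv B hmono hle hgen' h.1 h.2⟩, fun hfin => ?_⟩
  · by_contra hne
    obtain ⟨n, hn⟩ := tail_small hpmp hF hFinv B hmono hle hinv hgen' hfin
      (pos_iff_ne_zero.mpr hne)
    refine absurd hn (not_lt.mpr ((iInf_le _ n).trans ?_))
    exact iSup₂_le fun m _ => outer_mono (hle m)
  · exact le_antisymm (sup_le_main hpmp hF hFinv B hmono hle hinv hgen' hfin)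
      (iSup_le fun m => outer_mono (hle m))
end

section
/- Let G ↷ (X, μ) be a pmp action of a countable group and let (F_n)_{n∈ℕ} be an increasing sequence of G-invariant sub-σ-algebras with F = ⋁_{n∈ℕ} F_n. Then: (i) if P is a countable Borel partition with inf_n H_μ(P | F_n ∨ I_G) < ∞, then rh_{G,μ}(P | F) = inf_n rh_{G,μ}(P | F_n); and (ii) if inf_n rh_G(X, μ | F_n) < ∞, then rh_G(X, μ | F) = inf_n rh_G(X, μ | F_n). -/
open MeasureTheory Set Function
open scoped ENNReal symmDiff

open Filter Topology ProbabilityTheory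

namespace Rok

/-- Gibbs-type tangent inequality. -/
lemma gibbs {b a : ℝ} (hb : 0 ≤ b) (ha : 0 ≤ a) (h : a = 0 → b = 0) :
    Real.negMulLog b + b ≤ b * (-Real.log a) + a := by
  rcases hb.eq_or_lt with rfl | hb
  · simpa using ha
  have ha' : 0 < a := lt_of_le_of_ne ha (fun h0 => hb.ne' (h h0.symm))
  have h1 := Real.log_le_sub_one_of_pos (div_pos ha' hb)
  rw [Real.log_div ha'.ne' hb.ne'] at h1
  have h2 := mul_le_mul_of_nonneg_left h1 hb.le
  have h3 : b * (a / b - 1) = a - b := by field_simp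
  rw [h3] at h2
  unfold Real.negMulLog
  nlinarith

lemma neglog_nonneg {a : ℝ} (ha : 0 ≤ a) (ha1 : a ≤ 1) : 0 ≤ -Real.log a := by
  have := Real.log_nonpos ha ha1
  linarith

lemma dom {b f : ℝ} (hb : 0 ≤ b) (hbf : b ≤ f) (hf : f ≤ 1) :
    Real.negMulLog b ≤ Real.negMulLog f + f := by
  have hf0 := hb.trans hbf
  have h := gibbs hb hf0 (fun h0 => le_antisymm (h0 ▸ hbf) hb)
  have h2 := mul_le_mul_of_nonneg_right hbf (neglog_nonneg hf0 hf)
  unfold Real.negMulLog at *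
  linarith

section
variable {X : Type*} [mX : MeasurableSpace X]

lemma toReal_mem (ν : Measure X) [IsProbabilityMeasure ν] (A : Set X) :
    0 ≤ (ν A).toReal ∧ (ν A).toReal ≤ 1 :=
  ⟨ENNReal.toReal_nonneg, by
    have := ENNReal.toReal_mono ENNReal.one_ne_top (prob_le_one (μ := ν) (s := A))
    simpa using this⟩

lemma shEnt_join (ν : Measure X) [IsProbabilityMeasure ν] {ι κ : Type*} [Countable ι] [Countable κ]
    (Q : ι → Set X) (B : κ → Set X) (hQm : ∀ i, MeasurableSet (Q i))
    (hQd : Pairwise (Function.onFun Disjoint Q)) (hQu : (⋃ i, Q i) = univ)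
    (hBm : ∀ i, MeasurableSet (B i))
    (hBd : Pairwise (Function.onFun Disjoint B)) (hBu : (⋃ i, B i) = univ) :
    shEnt ν (fun p : ι × κ => Q p.1 ∩ B p.2) ≤ shEnt ν Q + shEnt ν B := by
  have hQs : ∑' i, ν (Q i) = 1 := by
    rw [← measure_iUnion hQd hQm, hQu, measure_univ]
  have hBs : ∑' i, ν (B i) = 1 := by
    rw [← measure_iUnion hBd hBm, hBu, measure_univ]
  have hrow : ∀ i, ∑' j, ν (Q i ∩ B j) = ν (Q i) := by
    intro i
    rw [← measure_iUnion, ← inter_iUnion, hBu, inter_univ]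
    · intro j k hjk
      exact (hBd hjk).mono inter_subset_right inter_subset_right
    · intro j; exact (hQm i).inter (hBm j)
  have hcol : ∀ j, ∑' i, ν (Q i ∩ B j) = ν (B j) := by
    intro j
    rw [← measure_iUnion, ← iUnion_inter, hQu, univ_inter]
    · intro i k hik
      exact (hQd hik).mono inter_subset_left inter_subset_left
    · intro i; exact (hQm i).inter (hBm j)
  have key : ∀ i j, ENNReal.ofReal (Real.negMulLog (ν (Q i ∩ B j)).toReal) + ν (Q i ∩ B j) ≤
      ν (Q i ∩ B j) * ENNReal.ofReal (-Real.log (ν (Q i)).toReal) +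
      ν (Q i ∩ B j) * ENNReal.ofReal (-Real.log (ν (B j)).toReal) + ν (Q i) * ν (B j) := by
    intro i j
    obtain ⟨p0, p1⟩ := toReal_mem ν (Q i ∩ B j)
    obtain ⟨q0, q1⟩ := toReal_mem ν (Q i)
    obtain ⟨b0, b1⟩ := toReal_mem ν (B j)
    have hpq : (ν (Q i ∩ B j)).toReal ≤ (ν (Q i)).toReal :=
      ENNReal.toReal_mono (measure_ne_top _ _) (measure_mono inter_subset_left)
    have hpb : (ν (Q i ∩ B j)).toReal ≤ (ν (B j)).toReal :=
      ENNReal.toReal_mono (measure_ne_top _ _) (measure_mono inter_subset_right)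
    have e : ∀ A : Set X, ν A = ENNReal.ofReal (ν A).toReal := fun A =>
      (ENNReal.ofReal_toReal (measure_ne_top _ _)).symm
    rw [e (Q i ∩ B j), e (Q i), e (B j)]
    simp only [ENNReal.toReal_ofReal ENNReal.toReal_nonneg]
    set p := (ν (Q i ∩ B j)).toReal
    set q := (ν (Q i)).toReal
    set b := (ν (B j)).toReal
    rw [← ENNReal.ofReal_mul p0, ← ENNReal.ofReal_mul p0, ← ENNReal.ofReal_mul q0,
      ← ENNReal.ofReal_add (Real.negMulLog_nonneg p0 p1) p0,
      ← ENNReal.ofReal_add (mul_nonneg p0 (neglog_nonneg q0 q1))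
        (mul_nonneg p0 (neglog_nonneg b0 b1)),
      ← ENNReal.ofReal_add (add_nonneg (mul_nonneg p0 (neglog_nonneg q0 q1))
        (mul_nonneg p0 (neglog_nonneg b0 b1))) (mul_nonneg q0 b0)]
    apply ENNReal.ofReal_le_ofReal
    rcases p0.eq_or_lt with hp | hp
    · rw [← hp]; simp; positivity
    · have hq : 0 < q := hp.trans_le hpq
      have hb : 0 < b := hp.trans_le hpb
      have := gibbs p0 (mul_nonneg q0 b0) (fun h => absurd h (mul_pos hq hb).ne')
      rw [Real.log_mul hq.ne' hb.ne'] at this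
      linarith
  have phi : ∀ A : Set X, ν A * ENNReal.ofReal (-Real.log (ν A).toReal) =
      ENNReal.ofReal (Real.negMulLog (ν A).toReal) := by
    intro A
    conv_lhs => rw [← ENNReal.ofReal_toReal (measure_ne_top ν A)]
    simp only [ENNReal.toReal_ofReal ENNReal.toReal_nonneg]
    rw [← ENNReal.ofReal_mul ENNReal.toReal_nonneg]
    congr 1
    unfold Real.negMulLog; ring
  have hsum := ENNReal.tsum_le_tsum (fun i => ENNReal.tsum_le_tsum (fun j => key i j))
  have e1 : ∑' i, ∑' j, ν (Q i ∩ B j) * ENNReal.ofReal (-Real.log (ν (Q i)).toReal) =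
      shEnt ν Q := by
    unfold shEnt
    refine tsum_congr fun i => ?_
    rw [ENNReal.tsum_mul_right, hrow, phi]
  have e2 : ∑' i, ∑' j, ν (Q i ∩ B j) * ENNReal.ofReal (-Real.log (ν (B j)).toReal) =
      shEnt ν B := by
    rw [ENNReal.tsum_comm]
    unfold shEnt
    refine tsum_congr fun i => ?_
    rw [ENNReal.tsum_mul_right, hcol, phi]
  have e3 : ∑' i, ∑' j, ν (Q i) * ν (B j) = 1 := by
    simp only [ENNReal.tsum_mul_left, hQs, hBs, mul_one]
  have e4 : ∑' i, ∑' j, ν (Q i ∩ B j) = 1 := by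
    simp only [hrow, hQs]
  simp only [ENNReal.tsum_add, e1, e2, e3, e4] at hsum
  have := (ENNReal.add_le_add_iff_right ENNReal.one_ne_top).1 hsum
  unfold shEnt at *
  rwa [ENNReal.tsum_prod (f := fun i j => ENNReal.ofReal (Real.negMulLog (ν (Q i ∩ B j)).toReal))]

lemma shEnt_coarse (ν : Measure X) [IsProbabilityMeasure ν] (α : ℕ → Set X)
    (hm : ∀ i, MeasurableSet (α i)) (hd : Pairwise (Function.onFun Disjoint α)) (c : ℕ → ℕ) :
    shEnt ν (fun k => ⋃ i : {i // c i = k}, α i) ≤ shEnt ν α := by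
  unfold shEnt
  have h1 : ∑' i, ENNReal.ofReal (Real.negMulLog (ν (α i)).toReal) =
      ∑' k, ∑' i : {i // c i = k}, ENNReal.ofReal (Real.negMulLog (ν (α i)).toReal) := by
    rw [← (Equiv.sigmaFiberEquiv c).tsum_eq, ENNReal.tsum_sigma']
    rfl
  rw [h1]
  refine ENNReal.tsum_le_tsum fun k => ?_
  set A := ⋃ i : {i // c i = k}, α i with hA
  have hs : ν A = ∑' i : {i // c i = k}, ν (α i) := by
    rw [hA, measure_iUnion]
    · intro i j hij
      exact hd (fun h => hij (Subtype.ext h))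
    · intro i; exact hm _
  obtain ⟨a0, a1⟩ := toReal_mem ν A
  have h2 : ENNReal.ofReal (Real.negMulLog (ν A).toReal) =
      ∑' i : {i // c i = k}, ν (α i) * ENNReal.ofReal (-Real.log (ν A).toReal) := by
    rw [ENNReal.tsum_mul_right, ← hs]
    conv_rhs => rw [← ENNReal.ofReal_toReal (measure_ne_top ν A)]
    simp only [ENNReal.toReal_ofReal ENNReal.toReal_nonneg]
    rw [← ENNReal.ofReal_mul ENNReal.toReal_nonneg]
    congr 1
    unfold Real.negMulLog; ring
  rw [h2]
  refine ENNReal.tsum_le_tsum fun i => ?_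
  conv_lhs => rw [← ENNReal.ofReal_toReal (measure_ne_top ν (α i))]
  rw [← ENNReal.ofReal_mul ENNReal.toReal_nonneg]
  apply ENNReal.ofReal_le_ofReal
  have hle : (ν (α i)).toReal ≤ (ν A).toReal :=
    ENNReal.toReal_mono (measure_ne_top _ _) (measure_mono (subset_iUnion (fun i : {i // c i = k} => α i) i))
  obtain ⟨p0, p1⟩ := toReal_mem ν (α i)
  rcases p0.eq_or_lt with hp | hp
  · rw [← hp]; simp
  · have := Real.log_le_log hp hle
    unfold Real.negMulLog
    nlinarith

end

section
variable {X : Type*} {m m' : MeasurableSpace X} [mX : MeasurableSpace X] [StandardBorelSpace X]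
  {μ : Measure X} [IsProbabilityMeasure μ]

lemma condEnt_eq (hm : m ≤ mX) {ι : Type*} [Countable ι] (α : ι → Set X)
    (hα : ∀ i, MeasurableSet (α i)) :
    condEnt m μ α = ∫⁻ x, shEnt (condExpKernel μ m x) α ∂μ := by
  unfold condEnt shEnt
  refine lintegral_congr_ae ?_
  have h : ∀ᵐ x ∂μ, ∀ i, (condExpKernel μ m x).real (α i) =
      (μ[(α i).indicator (fun _ => (1 : ℝ)) | m]) x :=
    ae_all_iff.2 fun i => condExpKernel_ae_eq_condExp hm (hα i)
  filter_upwards [h] with x hx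
  refine tsum_congr fun i => ?_
  rw [← hx i]; rfl

lemma meas_cell (hm : m ≤ mX) {A : Set X} (hA : MeasurableSet A) :
    Measurable fun x => ENNReal.ofReal (Real.negMulLog (condExpKernel μ m x A).toReal) := by
  have : Measurable fun x => condExpKernel μ m x A := (measurable_condExpKernel hA).mono hm le_rfl
  have h2 := Real.continuous_negMulLog.measurable
  exact (h2.comp this.ennreal_toReal).ennreal_ofReal

lemma meas_shEnt (hm : m ≤ mX) {ι : Type*} [Countable ι] {α : ι → Set X}
    (hα : ∀ i, MeasurableSet (α i)) :
    Measurable fun x => shEnt (condExpKernel μ m x) α :=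
  Measurable.tsum fun i => meas_cell hm (hα i)

lemma condEnt_join (hm : m ≤ mX) {Q B : ℕ → Set X} (hQ : IsPartition Q) (hB : IsPartition B) :
    condEnt m μ (fun n : ℕ => Q n.unpair.1 ∩ B n.unpair.2) ≤ condEnt m μ Q + condEnt m μ B := by
  rw [condEnt_eq hm _ (fun i => (hQ.1 _).inter (hB.1 _)), condEnt_eq hm _ hQ.1,
    condEnt_eq hm _ hB.1, ← lintegral_add_left (meas_shEnt hm hQ.1)]
  refine lintegral_mono fun x => ?_
  have := shEnt_join (condExpKernel μ m x) Q B hQ.1 hQ.2.1 hQ.2.2 hB.1 hB.2.1 hB.2.2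
  refine le_trans (le_of_eq ?_) this
  unfold shEnt
  exact Nat.pairEquiv.symm.tsum_eq
    (fun p : ℕ × ℕ => ENNReal.ofReal (Real.negMulLog (condExpKernel μ m x (Q p.1 ∩ B p.2)).toReal))

lemma condEnt_coarse (hm : m ≤ mX) {α : ℕ → Set X} (hα : IsPartition α) (c : ℕ → ℕ) :
    condEnt m μ (fun k => ⋃ i : {i // c i = k}, α i) ≤ condEnt m μ α := by
  rw [condEnt_eq hm _ (fun k => MeasurableSet.iUnion fun i => hα.1 _), condEnt_eq hm _ hα.1]
  exact lintegral_mono fun x => shEnt_coarse _ _ hα.1 hα.2.1 c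

set_option linter.unusedSectionVars false in
lemma cond_mem (hm : m ≤ mX) {A : Set X} (hA : MeasurableSet A) :
    ∀ᵐ x ∂μ, 0 ≤ (μ[A.indicator (fun _ => (1 : ℝ)) | m]) x ∧
      (μ[A.indicator (fun _ => (1 : ℝ)) | m]) x ≤ 1 := by
  have hi : Integrable (A.indicator (fun _ => (1 : ℝ))) μ := (integrable_const 1).indicator hA
  have h0 : 0 ≤ᵐ[μ] μ[A.indicator (fun _ => (1 : ℝ)) | m] :=
    condExp_nonneg (Eventually.of_forall fun x => indicator_nonneg (by simp) x)
  have h1 : μ[A.indicator (fun _ => (1 : ℝ)) | m] ≤ᵐ[μ] μ[(fun _ => (1 : ℝ)) | m] :=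
    condExp_mono hi (integrable_const 1)
      (Eventually.of_forall fun x => indicator_le_self' (by simp) x)
  rw [condExp_const hm] at h1
  filter_upwards [h0, h1] with x a b using ⟨a, b⟩

lemma condEnt_anti (hmm : m ≤ m') (hm' : m' ≤ mX) {ι : Type*}
    [Countable ι] (α : ι → Set X)
    (hα : ∀ i, MeasurableSet (α i)) : condEnt m' μ α ≤ condEnt m μ α := by
  have hm := hmm.trans hm'
  have meas : ∀ m'' : MeasurableSpace X, m'' ≤ mX → ∀ i, AEMeasurable (fun x => ENNReal.ofReal
    (Real.negMulLog ((μ[(α i).indicator (fun _ => (1 : ℝ)) | m'']) x))) μ := by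
    intro m'' hm'' i
    have h1 := (stronglyMeasurable_condExp (m := m'') (μ := μ)
      (f := (α i).indicator (fun _ => (1 : ℝ)))).measurable.mono hm'' le_rfl
    exact (Real.continuous_negMulLog.measurable.comp h1).ennreal_ofReal.aemeasurable
  unfold condEnt
  rw [lintegral_tsum (meas m' hm'), lintegral_tsum (meas m hm)]
  refine ENNReal.tsum_le_tsum fun i => ?_
  set f := μ[(α i).indicator (fun _ => (1 : ℝ)) | m'] with hf
  have hfm := cond_mem (μ := μ) hm' (hα i)
  have hgm := cond_mem (μ := μ) hm (hα i)
  have hfi : Integrable f μ := integrable_condExp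
  have htow : μ[f | m] =ᵐ[μ] μ[(α i).indicator (fun _ => (1 : ℝ)) | m] :=
    condExp_condExp_of_le hmm hm'
  set g := μ[(α i).indicator (fun _ => (1 : ℝ)) | m] with hg
  have intphi : ∀ u : X → ℝ, Integrable u μ → (∀ᵐ x ∂μ, 0 ≤ u x ∧ u x ≤ 1) →
      Integrable (Real.negMulLog ∘ u) μ := by
    intro u hu h
    refine Integrable.of_bound (Real.continuous_negMulLog.comp_aestronglyMeasurable hu.1) 1 ?_
    filter_upwards [h] with x hx
    simp only [comp_apply, Real.norm_eq_abs]
    rw [abs_of_nonneg (Real.negMulLog_nonneg hx.1 hx.2)]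
    linarith [Real.negMulLog_le_one_sub_self hx.1]
  have hphif := intphi f hfi hfm
  have hphig := intphi g integrable_condExp hgm
  have J := Real.concaveOn_negMulLog.condExp_map_le (μ := μ) (m := m) hm
    Real.continuous_negMulLog.continuousOn.upperSemicontinuousOn
    (f := f) (hfm.mono fun x hx => hx.1) isClosed_Ici hfi hphif
  rw [← ofReal_integral_eq_lintegral_ofReal (f := fun x => Real.negMulLog (f x)) hphif
      (hfm.mono fun x hx => Real.negMulLog_nonneg hx.1 hx.2),
    ← ofReal_integral_eq_lintegral_ofReal (f := fun x => Real.negMulLog (g x)) hphig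
      (hgm.mono fun x hx => Real.negMulLog_nonneg hx.1 hx.2)]
  apply ENNReal.ofReal_le_ofReal
  calc ∫ x, Real.negMulLog (f x) ∂μ = ∫ x, (μ[Real.negMulLog ∘ f | m]) x ∂μ :=
        (integral_condExp hm).symm
    _ ≤ ∫ x, Real.negMulLog (g x) ∂μ := by
        refine integral_mono_ae integrable_condExp hphig ?_
        filter_upwards [J, htow] with x h1 h2
        rw [← h2]; exact h1

end
end Rok

namespace Rok

/-- The partition which remembers `P` on `D` only. -/
def beta {X : Type*} (D : Set X) (P : ℕ → Set X) : ℕ → Set X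
  | 0 => Dᶜ
  | i + 1 => P i ∩ D

section
variable {X : Type*} {m m' : MeasurableSpace X} [mX : MeasurableSpace X]

lemma beta_partition {D : Set X} (hD : MeasurableSet D) {P : ℕ → Set X} (hP : IsPartition P) :
    IsPartition (beta D P) := by
  refine ⟨?_, ?_, ?_⟩
  · rintro (_ | i)
    · exact hD.compl
    · exact (hP.1 i).inter hD
  · rintro (_ | i) (_ | j) hij
    · exact absurd rfl hij
    · exact (disjoint_compl_left (a := D)).mono_right inter_subset_right
    · exact (disjoint_compl_right (a := D)).mono_left inter_subset_right
    · exact (hP.2.1 (fun h => hij (by rw [h]))).mono inter_subset_left inter_subset_left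
  · refine eq_univ_of_forall fun x => ?_
    rw [mem_iUnion]
    by_cases hx : x ∈ D
    · have : x ∈ ⋃ i, P i := by rw [hP.2.2]; trivial
      obtain ⟨i, hi⟩ := mem_iUnion.1 this
      exact ⟨i + 1, hi, hx⟩
    · exact ⟨0, hx⟩

lemma shEnt_beta (ν : Measure X) (D : Set X) (P : ℕ → Set X) :
    shEnt ν (beta D P) = ENNReal.ofReal (Real.negMulLog (ν Dᶜ).toReal) +
      ∑' i, ENNReal.ofReal (Real.negMulLog (ν (P i ∩ D)).toReal) := by
  unfold shEnt
  rw [tsum_eq_zero_add' ENNReal.summable]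
  rfl

lemma cell_bound (ν : Measure X) [IsProbabilityMeasure ν] (A D : Set X) :
    ENNReal.ofReal (Real.negMulLog (ν (A ∩ D)).toReal) ≤
      ENNReal.ofReal (Real.negMulLog (ν A).toReal) + ν A := by
  obtain ⟨p0, p1⟩ := toReal_mem ν A
  have hle : (ν (A ∩ D)).toReal ≤ (ν A).toReal :=
    ENNReal.toReal_mono (measure_ne_top _ _) (measure_mono inter_subset_left)
  have := ENNReal.ofReal_le_ofReal (dom ENNReal.toReal_nonneg hle p1)
  rwa [ENNReal.ofReal_add (Real.negMulLog_nonneg p0 p1) p0,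
    ENNReal.ofReal_toReal (measure_ne_top _ _)] at this

lemma phi_le_one {p : ℝ} (hp : 0 ≤ p) : ENNReal.ofReal (Real.negMulLog p) ≤ 1 := by
  have := Real.negMulLog_le_one_sub_self hp
  rw [← ENNReal.ofReal_one]
  exact ENNReal.ofReal_le_ofReal (by linarith)

lemma sum_cells (ν : Measure X) [IsProbabilityMeasure ν] {P : ℕ → Set X} (hP : IsPartition P) :
    ∑' i, ν (P i) = 1 := by
  rw [← measure_iUnion hP.2.1 hP.1, hP.2.2, measure_univ]

lemma shEnt_beta_le (ν : Measure X) [IsProbabilityMeasure ν] (D : Set X) {P : ℕ → Set X}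
    (hP : IsPartition P) : shEnt ν (beta D P) ≤ shEnt ν P + 2 := by
  rw [shEnt_beta]
  have h1 := phi_le_one (toReal_mem ν Dᶜ).1
  have h2 := ENNReal.tsum_le_tsum (fun i => cell_bound ν (P i) D)
  rw [ENNReal.tsum_add, sum_cells ν hP] at h2
  calc _ ≤ 1 + (shEnt ν P + 1) := add_le_add h1 h2
    _ = shEnt ν P + 2 := by rw [← one_add_one_eq_two]; ring

lemma phi_tendsto {p : ℕ → ℝ≥0∞} {a : ℝ≥0∞} (ha : a ≠ ⊤) (h : Tendsto p atTop (𝓝 a))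
    (h0 : Real.negMulLog a.toReal = 0) :
    Tendsto (fun n => ENNReal.ofReal (Real.negMulLog (p n).toReal)) atTop (𝓝 0) := by
  have h1 := (Real.continuous_negMulLog.tendsto a.toReal).comp ((ENNReal.tendsto_toReal ha).comp h)
  have h2 := (ENNReal.continuous_ofReal.tendsto _).comp h1
  rw [h0, ENNReal.ofReal_zero] at h2
  exact h2

lemma shEnt_beta_tendsto (ν : Measure X) [IsProbabilityMeasure ν] (D : ℕ → Set X)
    (hD : ∀ n, MeasurableSet (D n)) (hD0 : Tendsto (fun n => ν (D n)) atTop (𝓝 0)) {P : ℕ → Set X}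
    (hP : IsPartition P) (hfin : shEnt ν P ≠ ⊤) :
    Tendsto (fun n => shEnt ν (beta (D n) P)) atTop (𝓝 0) := by
  simp only [shEnt_beta]
  rw [← add_zero (0 : ℝ≥0∞)]
  apply Tendsto.add
  · apply phi_tendsto (a := 1) ENNReal.one_ne_top _ (by simp)
    have : Tendsto (fun n => 1 - ν (D n)) atTop (𝓝 (1 - 0)) :=
      ENNReal.Tendsto.sub tendsto_const_nhds hD0 (Or.inl ENNReal.one_ne_top)
    rw [tsub_zero] at this
    refine this.congr fun n => ?_
    rw [prob_compl_eq_one_sub (hD n)]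
  · have := tendsto_lintegral_of_dominated_convergence (μ := Measure.count)
      (F := fun n i => ENNReal.ofReal (Real.negMulLog (ν (P i ∩ D n)).toReal)) (f := fun _ => 0)
      (fun i => ENNReal.ofReal (Real.negMulLog (ν (P i)).toReal) + ν (P i))
      (fun n => measurable_of_countable _)
      (fun n => Eventually.of_forall fun i => cell_bound ν (P i) (D n)) ?_ ?_
    · simpa only [lintegral_count, tsum_zero] using this
    · rw [lintegral_count, ENNReal.tsum_add, sum_cells ν hP]
      exact ENNReal.add_ne_top.2 ⟨hfin, ENNReal.one_ne_top⟩
    · refine Eventually.of_forall fun i => phi_tendsto (a := 0) ENNReal.zero_ne_top ?_ (by simp)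
      exact tendsto_of_tendsto_of_tendsto_of_le_of_le tendsto_const_nhds hD0
        (fun _ => zero_le) (fun n => measure_mono inter_subset_right)

variable [StandardBorelSpace X] {μ : Measure X} [IsProbabilityMeasure μ]

lemma lint_kernel (hm : m ≤ mX) {A : Set X} (hA : MeasurableSet A) :
    ∫⁻ x, condExpKernel μ m x A ∂μ = μ A := by
  have h := congrArg (fun ν : Measure X => ν A) (condExpKernel_comp_trim (μ := μ) hm)
  rw [Measure.bind_apply hA (Kernel.aemeasurable _),
    lintegral_trim hm (measurable_condExpKernel hA)] at h
  exact h

lemma small (hm : m ≤ mX) {P : ℕ → Set X} (hP : IsPartition P) (hfin : condEnt m μ P ≠ ⊤)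
    {ε : ℝ≥0∞} (hε : 0 < ε) :
    ∃ δ : ℝ≥0∞, 0 < δ ∧ ∀ D, MeasurableSet D → μ D < δ → condEnt m μ (beta D P) < ε := by
  by_contra! hcon
  have h2 : ∀ n : ℕ, 0 < ((2 : ℝ≥0∞)⁻¹) ^ n := fun n => by
    apply ENNReal.pow_pos; simp
  choose D hDm hDs hDe using fun n : ℕ => hcon _ (h2 n)
  rw [condEnt_eq hm _ hP.1] at hfin
  have hae : ∀ᵐ x ∂μ, shEnt (condExpKernel μ m x) P < ⊤ :=
    ae_lt_top (meas_shEnt hm hP.1) hfin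
  have hmD : ∀ n, Measurable fun x => condExpKernel μ m x (D n) := fun n =>
    (measurable_condExpKernel (hDm n)).mono hm le_rfl
  have hsum : ∫⁻ x, ∑' n, condExpKernel μ m x (D n) ∂μ ≠ ⊤ := by
    rw [lintegral_tsum fun n => (hmD n).aemeasurable]
    simp only [lint_kernel hm (hDm _)]
    refine ne_top_of_le_ne_top ?_ (ENNReal.tsum_le_tsum fun n => (hDs n).le)
    rw [ENNReal.tsum_geometric]
    simp
  have hae2 : ∀ᵐ x ∂μ, ∑' n, condExpKernel μ m x (D n) < ⊤ :=
    ae_lt_top (Measurable.tsum hmD) hsum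
  have lim := tendsto_lintegral_of_dominated_convergence (μ := μ)
    (F := fun n x => shEnt (condExpKernel μ m x) (beta (D n) P)) (f := fun _ => 0)
    (fun x => shEnt (condExpKernel μ m x) P + 2)
    (fun n => meas_shEnt hm (beta_partition (hDm n) hP).1)
    (fun n => Eventually.of_forall fun x => shEnt_beta_le _ _ hP) ?_ ?_
  · simp only [lintegral_zero] at lim
    have := lim.eventually_lt_const hε
    obtain ⟨n, hn⟩ := this.exists
    have h3 := hDe n
    rw [condEnt_eq hm _ (beta_partition (hDm n) hP).1] at h3
    exact absurd hn (not_lt.2 h3)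
  · rw [lintegral_add_left (meas_shEnt hm hP.1)]
    simpa using hfin
  · filter_upwards [hae, hae2] with x h1 h2
    exact shEnt_beta_tendsto _ D hDm (ENNReal.tendsto_atTop_zero_of_tsum_ne_top h2.ne) hP h1.ne

end

section
variable {X : Type*} [mX : MeasurableSpace X] {μ : Measure X} [IsProbabilityMeasure μ]

lemma approx1 (K : ℕ → MeasurableSpace X) (hK : Monotone K) (hle : ∀ n, K n ≤ mX) {B : Set X}
    (hB : MeasurableSet[⨆ n, K n] B) {ε : ℝ} (hε : 0 < ε) :
    ∃ n C, MeasurableSet[K n] C ∧ μ (B ∆ C) < ENNReal.ofReal ε := by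
  have hle' : (⨆ n, K n) ≤ mX := iSup_le hle
  let A : Set (Set X) := {C | ∃ n, MeasurableSet[K n] C}
  have hA : IsSetAlgebra A := by
    refine ⟨⟨0, @MeasurableSet.empty _ (K 0)⟩, ?_, ?_⟩
    · rintro s ⟨n, hn⟩; exact ⟨n, hn.compl⟩
    · rintro s t ⟨n, hn⟩ ⟨k, hk⟩
      exact ⟨max n k, (hK (le_max_left n k) _ hn).union (hK (le_max_right n k) _ hk)⟩
  have hgen : (⨆ n, K n) = MeasurableSpace.generateFrom A := by
    refine le_antisymm (iSup_le fun n s hs => MeasurableSpace.measurableSet_generateFrom ⟨n, hs⟩) ?_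
    refine MeasurableSpace.generateFrom_le ?_
    rintro s ⟨n, hn⟩
    exact le_iSup K n _ hn
  have hd := @Measure.MeasureDense.of_generateFrom_isSetAlgebra_finite X (⨆ n, K n)
    (μ.trim hle') A _ hA hgen
  obtain ⟨C, ⟨n, hn⟩, hC⟩ := @Measure.MeasureDense.approx X (⨆ n, K n) _ _ hd B hB (measure_ne_top _ _) ε hε
  refine ⟨n, C, hn, ?_⟩
  rwa [trim_measurableSet_eq hle' (MeasurableSet.symmDiff hB (le_iSup K n _ hn))] at hC

lemma approx (K : ℕ → MeasurableSpace X) (hK : Monotone K) (hle : ∀ n, K n ≤ mX) {P : ℕ → Set X}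
    (hP : IsPartition P) (hs : SubsetMod (⨆ n, K n) μ (Set.range P)) {δ : ℝ≥0∞} (hδ : 0 < δ) :
    ∃ n D, MeasurableSet D ∧ μ D < δ ∧ ∀ i, ∃ C, MeasurableSet[K n] C ∧ P i ∩ Dᶜ = C ∩ Dᶜ := by
  have hδ2 : δ / 2 ≠ 0 := (ENNReal.half_pos hδ.ne').ne'
  obtain ⟨e, he, hesum⟩ := ENNReal.exists_pos_sum_of_countable hδ2 ℕ
  have h1 : ∀ i, ∃ n C, MeasurableSet[K n] C ∧ μ (P i ∆ C) ≤ e i := by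
    intro i
    obtain ⟨B, hB, hPB⟩ := hs (P i) ⟨i, rfl⟩
    obtain ⟨n, C, hC, hBC⟩ := approx1 (μ := μ) K hK hle hB (ε := e i) (he i)
    refine ⟨n, C, hC, ?_⟩
    calc μ (P i ∆ C) ≤ μ (P i ∆ B) + μ (B ∆ C) := measure_symmDiff_le _ _ _
      _ ≤ e i := by
        rw [hPB, zero_add]
        simpa using hBC.le
  choose k C hC hPC using h1
  have htail := ENNReal.tendsto_sum_nat_add (fun i => μ (P i))
    (by rw [sum_cells μ hP]; exact ENNReal.one_ne_top)
  obtain ⟨N, hN⟩ := (htail.eventually_lt_const (pos_iff_ne_zero.2 hδ2)).exists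
  refine ⟨(Finset.range N).sup k, (⋃ j, P (j + N)) ∪ ⋃ i, (P i ∆ C i), ?_, ?_, ?_⟩
  · exact (MeasurableSet.iUnion fun j => hP.1 _).union
      (MeasurableSet.iUnion fun i => (hP.1 i).symmDiff (hle _ _ (hC i)))
  · calc _ ≤ μ (⋃ j, P (j + N)) + μ (⋃ i, (P i ∆ C i)) := measure_union_le _ _
      _ ≤ (∑' j, μ (P (j + N))) + ∑' i, μ (P i ∆ C i) :=
        add_le_add (measure_iUnion_le _) (measure_iUnion_le _)
      _ ≤ (∑' j, μ (P (j + N))) + ∑' i, (e i : ℝ≥0∞) :=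
        add_le_add le_rfl (ENNReal.tsum_le_tsum hPC)
      _ < δ / 2 + δ / 2 := ENNReal.add_lt_add hN hesum
      _ = δ := ENNReal.add_halves δ
  · intro i
    by_cases hi : i < N
    · refine ⟨C i, hK (Finset.le_sup (f := k) (Finset.mem_range.2 hi)) _ (hC i), ?_⟩
      ext x
      simp only [mem_inter_iff, mem_compl_iff, mem_union, mem_iUnion, not_or, not_exists,
        mem_symmDiff]
      constructor
      · rintro ⟨h1, h2, h3⟩
        refine ⟨?_, h2, h3⟩
        by_contra h; exact (h3 i).1 ⟨h1, h⟩
      · rintro ⟨h1, h2, h3⟩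
        refine ⟨?_, h2, h3⟩
        by_contra h; exact (h3 i).2 ⟨h1, h⟩
    · refine ⟨∅, @MeasurableSet.empty _ (K _), ?_⟩
      rw [empty_inter]
      refine eq_empty_of_forall_notMem ?_
      rintro x ⟨h1, h2⟩
      apply h2
      left
      refine mem_iUnion.2 ⟨i - N, ?_⟩
      rwa [Nat.sub_add_cancel (not_lt.1 hi)]

lemma condEnt_tendsto (M : ℕ → MeasurableSpace X) (hM : Monotone M) (hle : ∀ n, M n ≤ mX)
    (Q : ℕ → Set X) (N : ℕ) (hN : ∀ i, N < i → Q i = ∅) :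
    Tendsto (fun n => condEnt (M n) μ Q) atTop (𝓝 (condEnt (⨆ n, M n) μ Q)) := by
  have hfinite : ∀ (m : MeasurableSpace X) (x : X), ∑' i, ENNReal.ofReal
      (Real.negMulLog ((μ[(Q i).indicator (fun _ => (1 : ℝ)) | m]) x)) =
      ∑ i ∈ Finset.range (N + 1), ENNReal.ofReal
      (Real.negMulLog ((μ[(Q i).indicator (fun _ => (1 : ℝ)) | m]) x)) := by
    intro m x
    refine tsum_eq_sum fun i hi => ?_
    rw [hN i (by simpa using hi), indicator_empty]
    have : (fun _ : X => (0 : ℝ)) = 0 := rfl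
    rw [this, condExp_zero]
    simp
  unfold condEnt
  simp only [hfinite]
  refine tendsto_lintegral_of_dominated_convergence (fun _ => ((N + 1 : ℕ) : ℝ≥0∞)) ?_ ?_ ?_ ?_
  · intro n
    refine Finset.measurable_sum _ fun i _ => ?_
    have h1 := (stronglyMeasurable_condExp (m := M n) (μ := μ)
      (f := (Q i).indicator (fun _ => (1 : ℝ)))).measurable.mono (hle n) le_rfl
    exact (Real.continuous_negMulLog.measurable.comp h1).ennreal_ofReal
  · intro n
    have h := ae_all_iff.2 fun i => condExp_nonneg (μ := μ) (m := M n)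
      (f := (Q i).indicator (fun _ => (1 : ℝ)))
      (Eventually.of_forall fun x => indicator_nonneg (by simp) x)
    filter_upwards [h] with x hx
    calc _ ≤ ∑ i ∈ Finset.range (N + 1), (1 : ℝ≥0∞) :=
          Finset.sum_le_sum fun i _ => phi_le_one (hx i)
      _ = ((N + 1 : ℕ) : ℝ≥0∞) := by simp
  · simp
  · let ℱ : Filtration ℕ mX := ⟨M, hM, hle⟩
    have h := ae_all_iff.2 fun i => tendsto_ae_condExp (μ := μ) (ℱ := ℱ)
      ((Q i).indicator (fun _ => (1 : ℝ)))
    filter_upwards [h] with x hx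
    refine tendsto_finsetSum _ fun i _ => ?_
    exact (ENNReal.continuous_ofReal.tendsto _).comp
      ((Real.continuous_negMulLog.tendsto _).comp (hx i))

end
end Rok

set_option linter.unusedSectionVars false

namespace Rok

section
variable {G X : Type*} [Group G] [MulAction G X]

lemma inv_iff {F : MeasurableSpace X} :
    InvariantAlg G F ↔ ∀ g : G, F ≤ F.map (fun x => g • x) := Iff.rfl

lemma inv_sup {F F' : MeasurableSpace X} (h : InvariantAlg G F) (h' : InvariantAlg G F') :
    InvariantAlg G (F ⊔ F') := by
  rw [inv_iff] at *
  intro g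
  refine sup_le ((h g).trans ?_) ((h' g).trans ?_)
  · intro s hs; exact (le_sup_left : F ≤ F ⊔ F') _ hs
  · intro s hs; exact (le_sup_right : F' ≤ F ⊔ F') _ hs

lemma inv_iSup {F : ℕ → MeasurableSpace X} (h : ∀ n, InvariantAlg G (F n)) :
    InvariantAlg G (⨆ n, F n) := by
  rw [inv_iff]
  intro g
  refine iSup_le fun n => (inv_iff.1 (h n) g).trans ?_
  intro s hs; exact (le_iSup F n) _ hs

lemma inv_sigmaG (ξ : Set (Set X)) : InvariantAlg G (sigmaG G ξ) := by
  rw [inv_iff]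
  intro g
  refine MeasurableSpace.generateFrom_le ?_
  rintro B ⟨h, A, hA, rfl⟩
  refine MeasurableSpace.measurableSet_generateFrom ⟨h * g, A, hA, ?_⟩
  ext x
  simp [mul_smul]

lemma mem_sigmaG {ξ : Set (Set X)} {A : Set X} (hA : A ∈ ξ) : MeasurableSet[sigmaG G ξ] A :=
  MeasurableSpace.measurableSet_generateFrom ⟨1, A, hA, by simp⟩

lemma sigmaG_le {ξ : Set (Set X)} {M : MeasurableSpace X} (hM : InvariantAlg G M)
    (h : ∀ A ∈ ξ, MeasurableSet[M] A) : sigmaG G ξ ≤ M := by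
  refine MeasurableSpace.generateFrom_le ?_
  rintro B ⟨g, A, hA, rfl⟩
  exact hM g A (h A hA)

variable {M M' F F' : MeasurableSpace X} [mX : MeasurableSpace X]

lemma inv_invSigma : InvariantAlg G (invSigma G X) := by
  rw [inv_iff]
  intro g
  refine MeasurableSpace.generateFrom_le ?_
  rintro B ⟨hB, h⟩
  refine MeasurableSpace.measurableSet_generateFrom ?_
  rw [mem_ofPred_eq, h g]
  exact ⟨hB, h⟩

lemma invSigma_le : invSigma G X ≤ mX :=
  MeasurableSpace.generateFrom_le fun _ h => h.1

variable {μ : Measure X} [IsProbabilityMeasure μ]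

lemma inv_mX (hpmp : IsPmp G μ) : InvariantAlg G mX := fun g _ hA => (hpmp g).measurable hA

lemma subsetMod_trans {ξ : Set (Set X)}
    (hM : M ≤ eventuallyMeasurableSpace M' (ae μ)) (h : SubsetMod M μ ξ) : SubsetMod M' μ ξ := by
  intro A hA
  obtain ⟨B, hB, hAB⟩ := h A hA
  obtain ⟨C, hC, hBC⟩ := hM B hB
  refine ⟨C, hC, ?_⟩
  rw [measure_symmDiff_eq_zero_iff] at *
  exact hAB.trans hBC

lemma subsetMod_mono {ξ : Set (Set X)}
    (hM : M ≤ M') (h : SubsetMod M μ ξ) : SubsetMod M' μ ξ := by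
  intro A hA
  obtain ⟨B, hB, hAB⟩ := h A hA
  exact ⟨B, hM _ hB, hAB⟩

lemma gen_trans_aux (hpmp : IsPmp G μ) (hFM : F ≤ M) (hIM : invSigma G X ≤ M)
    (hM : InvariantAlg G M)
    {P : ℕ → Set X} (h1 : SubsetMod M μ (Set.range P))
    {ξ : Set (Set X)} (h2 : SubsetMod (sigmaG G (Set.range P) ⊔ F ⊔ invSigma G X) μ ξ) :
    SubsetMod M μ ξ := by
  have hle : M ≤ eventuallyMeasurableSpace M (ae μ) := le_eventuallyMeasurableSpace
  refine subsetMod_trans (sup_le (sup_le ?_ (hFM.trans hle)) (hIM.trans hle)) h2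
  refine MeasurableSpace.generateFrom_le ?_
  rintro B ⟨g, A, hA, rfl⟩
  obtain ⟨C, hC, hAC⟩ := h1 A hA
  rw [measure_symmDiff_eq_zero_iff] at hAC
  refine ⟨(fun x => g • x) ⁻¹' C, hM g C hC, ?_⟩
  exact (hpmp g).quasiMeasurePreserving.preimage_ae_eq hAC

/-- Transitivity of generation modulo null sets. -/
lemma gen_trans (hpmp : IsPmp G μ) (hFF : F ≤ F') (hF : InvariantAlg G F')
    {α P : ℕ → Set X} (h1 : SubsetMod (sigmaG G (Set.range α) ⊔ F' ⊔ invSigma G X) μ (Set.range P))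
    {ξ : Set (Set X)} (h2 : SubsetMod (sigmaG G (Set.range P) ⊔ F ⊔ invSigma G X) μ ξ) :
    SubsetMod (sigmaG G (Set.range α) ⊔ F' ⊔ invSigma G X) μ ξ :=
  gen_trans_aux hpmp (hFF.trans (le_sup_right.trans le_sup_left)) le_sup_right
    (inv_sup (inv_sup (inv_sigmaG _) hF) inv_invSigma) h1 h2

lemma outer_anti (hFF : F ≤ F') (hF' : F' ≤ mX) [StandardBorelSpace X]
    (ξ : Set (Set X)) :
    outerRokhlin G ξ F' μ ≤ outerRokhlin G ξ F μ := by
  refine le_sInf ?_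
  rintro h ⟨α, hα, hs, rfl⟩
  refine le_trans (sInf_le ⟨α, hα, subsetMod_mono ?_ hs, rfl⟩)
    (condEnt_anti (sup_le_sup_right hFF _) (sup_le hF' invSigma_le) α hα.1)
  exact sup_le_sup_right (sup_le_sup_left hFF _) _

lemma part_one [StandardBorelSpace X] (hpmp : IsPmp G μ)
    (F : ℕ → MeasurableSpace X) (hmono : Monotone F) (hle : ∀ n, F n ≤ mX)
    (hinv : ∀ n, InvariantAlg G (F n)) (P : ℕ → Set X) (hP : IsPartition P)
    (hfin : (⨅ n, condEnt (F n ⊔ invSigma G X) μ P) < ⊤) :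
    outerRokhlin G (Set.range P) (⨆ n, F n) μ =
      ⨅ n, outerRokhlin G (Set.range P) (F n) μ := by
  refine le_antisymm (le_iInf fun n => outer_anti (le_iSup F n) (iSup_le hle) _) ?_
  obtain ⟨n₀, hn₀⟩ := iInf_lt_iff.1 hfin
  refine le_sInf ?_
  rintro h ⟨α, hα, hs, rfl⟩
  refine ENNReal.le_of_forall_pos_le_add fun ε hε _ => ?_
  have hε2 : (0 : ℝ≥0∞) < (ε : ℝ≥0∞) / 2 :=
    ENNReal.half_pos (ENNReal.coe_pos.2 hε).ne'
  have hMle : ∀ n, F n ⊔ invSigma G X ≤ mX := fun n => sup_le (hle n) invSigma_le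
  have hMmono : Monotone fun n => F n ⊔ invSigma G X := fun i j hij =>
    sup_le_sup_right (hmono hij) _
  have hMsup : (⨆ n, F n ⊔ invSigma G X) = (⨆ n, F n) ⊔ invSigma G X := iSup_sup.symm
  obtain ⟨δ, hδ, hD⟩ := small (hMle n₀) hP hn₀.ne hε2
  -- the approximating algebras
  let K : ℕ → MeasurableSpace X := fun n =>
    sigmaG G (α '' Set.Iio n) ⊔ F n ⊔ invSigma G X
  have hKmono : Monotone K := fun i j hij =>
    sup_le_sup_right (sup_le_sup (sigmaG_le (inv_sigmaG _) fun A hA =>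
      mem_sigmaG (image_mono (Iio_subset_Iio hij) hA)) (hmono hij)) _
  have hKle : ∀ n, K n ≤ mX := fun n => sup_le (sup_le (sigmaG_le (inv_mX hpmp) (by
    rintro A ⟨i, -, rfl⟩; exact hα.1 i)) (hle n)) invSigma_le
  have hKinv : InvariantAlg G (⨆ n, K n) := inv_iSup fun n =>
    inv_sup (inv_sup (inv_sigmaG _) (hinv n)) inv_invSigma
  have hKsup : sigmaG G (Set.range α) ⊔ (⨆ n, F n) ⊔ invSigma G X ≤ ⨆ n, K n := by
    refine sup_le (sup_le (sigmaG_le hKinv ?_) (iSup_le fun n => ?_)) ?_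
    · rintro A ⟨i, rfl⟩
      refine le_iSup K (i + 1) _ ?_
      exact (le_sup_left.trans le_sup_left : sigmaG G (α '' Set.Iio (i + 1)) ≤ K (i + 1)) _
        (mem_sigmaG ⟨i, Nat.lt_succ_self i, rfl⟩)
    · exact (le_sup_right.trans le_sup_left : F n ≤ K n).trans (le_iSup K n)
    · exact (le_sup_right : invSigma G X ≤ K 0).trans (le_iSup K 0)
  obtain ⟨N, D, hDm, hDδ, hDP⟩ := approx K hKmono hKle hP (subsetMod_mono hKsup hs) hδ
  have hB := hD D hDm hDδ
  let Q : ℕ → Set X := fun k => ⋃ i : {i // min i N = k}, α i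
  have hQ : IsPartition Q := by
    refine ⟨fun k => MeasurableSet.iUnion fun i => hα.1 _, ?_, ?_⟩
    · intro k l hkl
      refine disjoint_iUnion_left.2 fun i => disjoint_iUnion_right.2 fun j => ?_
      refine hα.2.1 fun hij => hkl ?_
      rw [← i.2, ← j.2, hij]
    · refine eq_univ_of_forall fun x => ?_
      have : x ∈ ⋃ i, α i := by rw [hα.2.2]; trivial
      obtain ⟨i, hi⟩ := mem_iUnion.1 this
      exact mem_iUnion.2 ⟨min i N, mem_iUnion.2 ⟨⟨i, rfl⟩, hi⟩⟩
  have hQN : ∀ i, N < i → Q i = ∅ := by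
    intro i hi
    refine iUnion_eq_empty.2 ?_
    rintro ⟨j, hj⟩
    exact absurd hj (by omega)
  have hQα : ∀ i, i < N → Q i = α i := by
    intro i hi
    ext x
    simp only [Q, mem_iUnion]
    constructor
    · rintro ⟨⟨j, hj⟩, hx⟩
      have : j = i := by omega
      rwa [← this]
    · intro hx
      exact ⟨⟨i, by omega⟩, hx⟩
  have hlim := condEnt_tendsto (μ := μ) _ hMmono hMle Q N hQN
  rw [hMsup] at hlim
  have hQle : condEnt ((⨆ n, F n) ⊔ invSigma G X) μ Q ≤
      condEnt ((⨆ n, F n) ⊔ invSigma G X) μ α :=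
    condEnt_coarse (sup_le (iSup_le hle) invSigma_le) hα _
  rcases eq_or_ne (condEnt ((⨆ n, F n) ⊔ invSigma G X) μ α) ⊤ with htop | htop
  · rw [htop]; simp
  have hlt : condEnt ((⨆ n, F n) ⊔ invSigma G X) μ Q <
      condEnt ((⨆ n, F n) ⊔ invSigma G X) μ α + (ε : ℝ≥0∞) / 2 :=
    lt_of_le_of_lt hQle (ENNReal.lt_add_right htop hε2.ne')
  obtain ⟨n, hn1, hn2⟩ := ((hlim.eventually_lt_const hlt).and
    (eventually_ge_atTop (max N n₀))).exists
  have hNn : N ≤ n := (le_max_left _ _).trans hn2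
  have hn₀n : n₀ ≤ n := (le_max_right _ _).trans hn2
  have hβ := beta_partition hDm hP
  let γ : ℕ → Set X := fun k : ℕ => Q k.unpair.1 ∩ beta D P k.unpair.2
  have hγ : IsPartition γ := by
    refine ⟨fun k => (hQ.1 _).inter (hβ.1 _), ?_, ?_⟩
    · intro k l hkl
      by_cases h1 : k.unpair.1 = l.unpair.1
      · have h2 : k.unpair.2 ≠ l.unpair.2 := by
          intro h2
          apply hkl
          rw [← Nat.pair_unpair k, ← Nat.pair_unpair l, h1, h2]
        exact (hβ.2.1 h2).mono inter_subset_right inter_subset_right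
      · exact (hQ.2.1 h1).mono inter_subset_left inter_subset_left
    · refine eq_univ_of_forall fun x => ?_
      have h1 : x ∈ ⋃ i, Q i := by rw [hQ.2.2]; trivial
      have h2 : x ∈ ⋃ i, beta D P i := by rw [hβ.2.2]; trivial
      obtain ⟨i, hi⟩ := mem_iUnion.1 h1
      obtain ⟨j, hj⟩ := mem_iUnion.1 h2
      refine mem_iUnion.2 ⟨Nat.pair i j, ?_⟩
      simp only [γ, Nat.unpair_pair]
      exact ⟨hi, hj⟩
  have hcell : ∀ i j, MeasurableSet[sigmaG G (Set.range γ)] (Q i ∩ beta D P j) := by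
    intro i j
    refine mem_sigmaG ⟨Nat.pair i j, ?_⟩
    simp only [γ, Nat.unpair_pair]
  have hQγ : ∀ i, MeasurableSet[sigmaG G (Set.range γ)] (Q i) := by
    intro i
    have : Q i = ⋃ j, Q i ∩ beta D P j := by rw [← inter_iUnion, hβ.2.2, inter_univ]
    rw [this]
    exact MeasurableSet.iUnion fun j => hcell i j
  have hβγ : ∀ j, MeasurableSet[sigmaG G (Set.range γ)] (beta D P j) := by
    intro j
    have : beta D P j = ⋃ i, Q i ∩ beta D P j := by rw [← iUnion_inter, hQ.2.2, univ_inter]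
    rw [this]
    exact MeasurableSet.iUnion fun i => hcell i j
  have hKγ : K N ≤ sigmaG G (Set.range γ) ⊔ F n ⊔ invSigma G X := by
    refine sup_le_sup_right (sup_le_sup (sigmaG_le (inv_sigmaG _) ?_) (hmono hNn)) _
    rintro A ⟨i, hi, rfl⟩
    rw [← hQα i hi]
    exact hQγ i
  have hγle : sigmaG G (Set.range γ) ≤ sigmaG G (Set.range γ) ⊔ F n ⊔ invSigma G X :=
    le_sup_left.trans le_sup_left
  have hsub : SubsetMod (sigmaG G (Set.range γ) ⊔ F n ⊔ invSigma G X) μ (Set.range P) := by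
    rintro A ⟨i, rfl⟩
    refine ⟨P i, ?_, by simp⟩
    obtain ⟨C, hC, hPC⟩ := hDP i
    have : P i = beta D P (i + 1) ∪ (C ∩ beta D P 0) := by
      change P i = (P i ∩ D) ∪ (C ∩ Dᶜ)
      rw [← hPC, inter_union_compl]
    rw [this]
    exact (hγle _ (hβγ (i + 1))).union ((hKγ _ hC).inter (hγle _ (hβγ 0)))
  calc ⨅ n, outerRokhlin G (Set.range P) (F n) μ ≤ outerRokhlin G (Set.range P) (F n) μ :=
        iInf_le _ n
    _ ≤ condEnt (F n ⊔ invSigma G X) μ γ := sInf_le ⟨γ, hγ, hsub, rfl⟩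
    _ ≤ condEnt (F n ⊔ invSigma G X) μ Q + condEnt (F n ⊔ invSigma G X) μ (beta D P) :=
        condEnt_join (hMle n) hQ hβ
    _ ≤ (condEnt ((⨆ n, F n) ⊔ invSigma G X) μ α + (ε : ℝ≥0∞) / 2) + (ε : ℝ≥0∞) / 2 :=
        add_le_add hn1.le ((condEnt_anti (hMmono hn₀n) (hMle n) _ hβ.1).trans hB.le)
    _ = condEnt ((⨆ n, F n) ⊔ invSigma G X) μ α + ε := by
        rw [add_assoc, ENNReal.add_halves]

lemma part_two [StandardBorelSpace X] (hpmp : IsPmp G μ)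
    (F : ℕ → MeasurableSpace X) (hmono : Monotone F) (hle : ∀ n, F n ≤ mX)
    (hinv : ∀ n, InvariantAlg G (F n)) (hfin : (⨅ n, rokhlin G (F n) μ) < ⊤) :
    rokhlin G (⨆ n, F n) μ = ⨅ n, rokhlin G (F n) μ := by
  unfold rokhlin at *
  refine le_antisymm (le_iInf fun n => outer_anti (le_iSup F n) (iSup_le hle) _) ?_
  obtain ⟨n₀, hn₀⟩ := iInf_lt_iff.1 hfin
  obtain ⟨_, ⟨P, hP, hPs, rfl⟩, hPfin⟩ := sInf_lt_iff.1 hn₀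
  have h1 := part_one hpmp F hmono hle hinv P hP (iInf_lt_iff.2 ⟨n₀, hPfin⟩)
  have h2 : outerRokhlin G (Set.range P) (⨆ n, F n) μ ≤
      outerRokhlin G {A | MeasurableSet A} (⨆ n, F n) μ := by
    refine sInf_le_sInf ?_
    rintro _ ⟨α, hα, hs, rfl⟩
    refine ⟨α, hα, fun A hA => hs A ?_, rfl⟩
    obtain ⟨i, rfl⟩ := hA
    exact hP.1 i
  refine le_trans ?_ (h1 ▸ h2)
  refine le_iInf fun n => ?_
  calc ⨅ n, outerRokhlin G {A | MeasurableSet A} (F n) μ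
      ≤ outerRokhlin G {A | MeasurableSet A} (F (max n n₀)) μ := iInf_le _ _
    _ ≤ outerRokhlin G (Set.range P) (F (max n n₀)) μ := by
        refine sInf_le_sInf ?_
        rintro _ ⟨α, hα, hs, rfl⟩
        exact ⟨α, hα, gen_trans hpmp (hmono (le_max_right n n₀)) (hinv _) hs hPs, rfl⟩
    _ ≤ outerRokhlin G (Set.range P) (F n) μ :=
        outer_anti (hmono (le_max_left n n₀)) (hle _) _

end
end Rok

/-- Corollary 6.2: relative Rokhlin entropy over an increasing union
of invariant sub-σ-algebras is the infimum of the relative entropies, both for the outer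
Rokhlin entropy of a partition of finite conditional entropy and for the Rokhlin entropy
of the action. -/
theorem statement16 {G X : Type*} [Group G] [Countable G]
    [mX : MeasurableSpace X] [StandardBorelSpace X] [MulAction G X]
    (μ : Measure X) [IsProbabilityMeasure μ] (hpmp : IsPmp G μ)
    (F : ℕ → MeasurableSpace X) (hmono : Monotone F) (hle : ∀ n, F n ≤ mX)
    (hinv : ∀ n, InvariantAlg G (F n)) :
    (∀ P : ℕ → Set X, IsPartition P →
        (⨅ n, condEnt (F n ⊔ invSigma G X) μ P) < ⊤ →
        outerRokhlin G (Set.range P) (⨆ n, F n) μ =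
          ⨅ n, outerRokhlin G (Set.range P) (F n) μ) ∧
      ((⨅ n, rokhlin G (F n) μ) < ⊤ →
        rokhlin G (⨆ n, F n) μ = ⨅ n, rokhlin G (F n) μ) := by
  exact ⟨fun P hP hfin => Rok.part_one hpmp F hmono hle hinv P hP hfin,
    fun hfin => Rok.part_two hpmp F hmono hle hinv hfin⟩
end

section
/- Let G and Γ be countable groups with pmp actions G ↷ (X, μ) and Γ ↷ (X, μ) on the same standard probability space having the same orbits μ-almost-everywhere (for μ-a.e. x, G·x = Γ·x). Let F be a sub-σ-algebra that is invariant under both actions. Assume there exist maps c_Γ : X × G → Γ and c_G : X × Γ → G such that for each g ∈ G the map x ↦ c_Γ(x, g) is F-measurable, for each γ ∈ Γ the map x ↦ c_G(x, γ) is F-measurable, and for μ-almost-every x ∈ X: g·x = c_Γ(x, g)·x for all g ∈ G and γ·x = c_G(x, γ)·x for all γ ∈ Γ. Then rh_G(X, μ | F) = rh_Γ(X, μ | F), where each Rokhlin entropy is computed with respect to the corresponding action and its invariant σ-algebra. -/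
open MeasureTheory Set Function
open scoped ENNReal symmDiff

section Helpers

variable {G Γ X : Type*}

lemma aux_le_ev {X : Type*} (m : MeasurableSpace X) [mX : MeasurableSpace X] (μ : Measure X) :
    m ≤ eventuallyMeasurableSpace m (ae μ) :=
  fun s hs => ⟨s, hs, Filter.EventuallyEq.rfl⟩

lemma aux_ev_mono {X : Type*} (m m' : MeasurableSpace X) [mX : MeasurableSpace X]
    (μ : Measure X) (h : m ≤ m') :
    eventuallyMeasurableSpace m (ae μ) ≤ eventuallyMeasurableSpace m' (ae μ) := by
  rintro s ⟨t, ht, hst⟩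
  exact ⟨t, h t ht, hst⟩

lemma aux_inv_le_top (G X : Type*) [Group G] [MulAction G X] [mX : MeasurableSpace X] :
    invSigma G X ≤ mX :=
  MeasurableSpace.generateFrom_le fun _ hs => hs.1

lemma aux_inv_le [Group G] [Group Γ] [Countable Γ]
    [mX : MeasurableSpace X] [MulAction G X] [MulAction Γ X]
    (μ : Measure X) (hpmpΓ : IsPmp Γ μ) (cG : X → Γ → G)
    (hcG : ∀ γ : Γ, ∀ᵐ x ∂μ, γ • x = (cG x γ) • x) :
    invSigma G X ≤ eventuallyMeasurableSpace (invSigma Γ X) (ae μ) := by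
  refine MeasurableSpace.generateFrom_le ?_
  rintro A ⟨hA, hinv⟩
  refine ⟨⋂ γ : Γ, (fun x => γ • x) ⁻¹' A, ?_, ?_⟩
  · refine MeasurableSpace.measurableSet_generateFrom ⟨?_, ?_⟩
    · exact MeasurableSet.iInter fun γ => (hpmpΓ γ).measurable hA
    · intro γ
      ext x
      simp only [mem_preimage, mem_iInter, smul_smul]
      constructor
      · intro h δ
        have := h (δ * γ⁻¹)
        simpa using this
      · intro h δ
        exact h (δ * γ)
  · rw [Filter.eventuallyEq_set]
    filter_upwards [ae_all_iff.2 hcG] with x hx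
    have key : ∀ γ : Γ, γ • x ∈ A ↔ x ∈ A := by
      intro γ
      rw [hx γ]
      exact Set.ext_iff.1 (hinv (cG x γ)) x
    simp [key]

lemma aux_sigma_le [Group G] [Group Γ] [Countable Γ]
    (F : MeasurableSpace X) [mX : MeasurableSpace X] [MulAction G X] [MulAction Γ X]
    (μ : Measure X) (cΓ : X → G → Γ)
    (hcΓm : ∀ (g : G) (γ : Γ), MeasurableSet[F] {x : X | cΓ x g = γ})
    (hcΓ : ∀ g : G, ∀ᵐ x ∂μ, g • x = (cΓ x g) • x) (ξ : Set (Set X)) :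
    sigmaG G ξ ≤ eventuallyMeasurableSpace (sigmaG Γ ξ ⊔ F) (ae μ) := by
  refine MeasurableSpace.generateFrom_le ?_
  rintro B ⟨g, A, hA, rfl⟩
  refine ⟨⋃ γ : Γ, {x : X | cΓ x g = γ} ∩ (fun x => γ • x) ⁻¹' A, ?_, ?_⟩
  · refine MeasurableSet.iUnion fun γ => MeasurableSet.inter ?_ ?_
    · exact (le_sup_right : F ≤ sigmaG Γ ξ ⊔ F) _ (hcΓm g γ)
    · refine (le_sup_left : sigmaG Γ ξ ≤ sigmaG Γ ξ ⊔ F) _ ?_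
      exact MeasurableSpace.measurableSet_generateFrom ⟨γ, A, hA, rfl⟩
  · rw [Filter.eventuallyEq_set]
    filter_upwards [hcΓ g] with x hx
    simp [hx]

lemma aux_condExp {X : Type*} (m m' : MeasurableSpace X) [mX : MeasurableSpace X]
    (μ : Measure X) [IsProbabilityMeasure μ] (h : m ≤ m') (h' : m' ≤ mX)
    (hev : m' ≤ eventuallyMeasurableSpace m (ae μ)) (f : X → ℝ) (hf : Integrable f μ) :
    μ[f | m] =ᵐ[μ] μ[f | m'] := by
  refine ae_eq_condExp_of_forall_setIntegral_eq h' hf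
    (fun s _ _ => integrable_condExp.integrableOn) ?_ ?_
  · intro s hs _
    obtain ⟨t, ht, hst⟩ := hev s hs
    rw [setIntegral_congr_set hst, setIntegral_congr_set hst]
    exact setIntegral_condExp (h.trans h') hf ht
  · exact (stronglyMeasurable_condExp.mono h).aestronglyMeasurable

lemma aux_condEnt {X : Type*} (m m' : MeasurableSpace X) [mX : MeasurableSpace X]
    (μ : Measure X) [IsProbabilityMeasure μ] (hm : m ≤ mX) (hm' : m' ≤ mX)
    (h1 : m ≤ eventuallyMeasurableSpace m' (ae μ))
    (h2 : m' ≤ eventuallyMeasurableSpace m (ae μ))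
    (α : ℕ → Set X) (hα : ∀ i, MeasurableSet (α i)) :
    condEnt m μ α = condEnt m' μ α := by
  have key : ∀ i, μ[(α i).indicator (fun _ => (1 : ℝ)) | m] =ᵐ[μ]
      μ[(α i).indicator (fun _ => (1 : ℝ)) | m'] := by
    intro i
    have hf : Integrable ((α i).indicator (fun _ => (1 : ℝ))) μ :=
      (integrable_const 1).indicator (hα i)
    exact (aux_condExp m (m ⊔ m') μ le_sup_left (sup_le hm hm')
      (sup_le (aux_le_ev m μ) h2) _ hf).trans
      (aux_condExp m' (m ⊔ m') μ le_sup_right (sup_le hm hm')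
      (sup_le h1 (aux_le_ev m' μ)) _ hf).symm
  refine lintegral_congr_ae ?_
  filter_upwards [ae_all_iff.2 key] with x hx
  simp only [hx]

lemma aux_rokhlin_le [Group G] [Countable G] [Group Γ] [Countable Γ]
    (F : MeasurableSpace X) [mX : MeasurableSpace X] [MulAction G X] [MulAction Γ X]
    (μ : Measure X) [IsProbabilityMeasure μ]
    (hpmpG : IsPmp G μ) (hpmpΓ : IsPmp Γ μ) (hFle : F ≤ mX)
    (cΓ : X → G → Γ) (cG : X → Γ → G)
    (hcΓm : ∀ (g : G) (γ : Γ), MeasurableSet[F] {x : X | cΓ x g = γ})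
    (hcΓ : ∀ g : G, ∀ᵐ x ∂μ, g • x = (cΓ x g) • x)
    (hcG : ∀ γ : Γ, ∀ᵐ x ∂μ, γ • x = (cG x γ) • x) :
    rokhlin Γ F μ ≤ rokhlin G F μ := by
  refine le_sInf ?_
  rintro h ⟨α, hα, hsub, rfl⟩
  have hG := aux_inv_le (G := G) (Γ := Γ) μ hpmpΓ cG hcG
  have hΓ := aux_inv_le (G := Γ) (Γ := G) μ hpmpG cΓ hcΓ
  refine sInf_le ⟨α, hα, ?_, ?_⟩
  · have hle : sigmaG G (Set.range α) ⊔ F ⊔ invSigma G X ≤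
        eventuallyMeasurableSpace (sigmaG Γ (Set.range α) ⊔ F ⊔ invSigma Γ X) (ae μ) := by
      refine sup_le (sup_le ?_ ?_) ?_
      · exact (aux_sigma_le F μ cΓ hcΓm hcΓ _).trans (aux_ev_mono _ _ μ le_sup_left)
      · exact (aux_le_ev F μ).trans (aux_ev_mono _ _ μ (le_sup_right.trans le_sup_left))
      · exact hG.trans (aux_ev_mono _ _ μ le_sup_right)
    intro A hA
    obtain ⟨B, hB, hAB⟩ := hsub A hA
    obtain ⟨C, hC, hBC⟩ := hle B hB
    exact ⟨C, hC, measure_symmDiff_eq_zero_iff.2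
      ((measure_symmDiff_eq_zero_iff.1 hAB).trans hBC)⟩
  · refine aux_condEnt _ _ μ (sup_le hFle (aux_inv_le_top G X))
      (sup_le hFle (aux_inv_le_top Γ X)) (sup_le ?_ ?_) (sup_le ?_ ?_) α hα.1
    · exact (aux_le_ev F μ).trans (aux_ev_mono _ _ μ le_sup_left)
    · exact hG.trans (aux_ev_mono _ _ μ le_sup_right)
    · exact (aux_le_ev F μ).trans (aux_ev_mono _ _ μ le_sup_left)
    · exact hΓ.trans (aux_ev_mono _ _ μ le_sup_right)

end Helpers

/-- Proposition 8.4, restricted orbit equivalence: if two pmp actions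
of countable groups `G` and `Γ` on `(X, μ)` have the same orbits a.e. and the orbit
change-of-group cocycles are `F`-measurable, then the relative Rokhlin entropies
coincide. -/
theorem statement17 {G Γ X : Type*} (F : MeasurableSpace X)
    [Group G] [Countable G] [Group Γ] [Countable Γ]
    [mX : MeasurableSpace X] [StandardBorelSpace X]
    [MulAction G X] [MulAction Γ X]
    (μ : Measure X) [IsProbabilityMeasure μ]
    (hpmpG : IsPmp G μ) (hpmpΓ : IsPmp Γ μ)
    (horb : ∀ᵐ x ∂μ, MulAction.orbit G x = MulAction.orbit Γ x)
    (hFle : F ≤ mX) (hFG : InvariantAlg G F) (hFΓ : InvariantAlg Γ F)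
    (cΓ : X → G → Γ) (cG : X → Γ → G)
    (hcΓm : ∀ (g : G) (γ : Γ), MeasurableSet[F] {x : X | cΓ x g = γ})
    (hcGm : ∀ (γ : Γ) (g : G), MeasurableSet[F] {x : X | cG x γ = g})
    (hcΓ : ∀ g : G, ∀ᵐ x ∂μ, g • x = (cΓ x g) • x)
    (hcG : ∀ γ : Γ, ∀ᵐ x ∂μ, γ • x = (cG x γ) • x) :
    rokhlin G F μ = rokhlin Γ F μ := by
  exact le_antisymm
    (aux_rokhlin_le F μ hpmpΓ hpmpG hFle cG cΓ hcGm hcG hcΓ)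
    (aux_rokhlin_le F μ hpmpG hpmpΓ hFle cΓ cG hcΓm hcΓ hcG)
end
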